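/- Let g ∈ C¹((a,b), ℝ) with a < 0 < b, g(x) = x + o(x) as x → 0, and x·g(x) > 0 for x ≠ 0, and let f₁, f₃, …, f_{2N+1} : (a,b) → ℝ be continuously differentiable, with all even-index coefficients f_{2k} ≡ 0. Set G(x) = ∫₀^x g(s) ds. Assume that for every k = 0, …, N condition (H_g^{2k+1}) holds: for all x ≠ 0, x·[ (2k+1)·f_{2k+1}(x)·g(x) + 2G(x)·(f_{2k+1}'(x)·g(x) − f_{2k+1}(x)·g'(x))/g(x) ] ≥ 0. Assume further that there exists a sequence x_m → 0 such that for every m there exists k(m) for which the inequality (H_g^{2k(m)+1}) is strict at x_m (the left-hand side is nonzero). Then the system ẋ = y, ẏ = −g(x) − Σ_{k=0}^{N} f_{2k+1}(x)·y^{2k+1} has at most one limit cycle in the region (a,b) × ℝ, and if such a limit cycle exists it is hyperbolic. -/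

import Mathlib

open Set Filter Metric Real Topology intervalIntegral

noncomputable section

/-- `γ` solves the planar ODE with vector field `F` at every time in `s`. -/
def IsSolOn (F : ℝ × ℝ → ℝ × ℝ) (γ : ℝ → ℝ × ℝ) (s : Set ℝ) : Prop :=
  ∀ t ∈ s, HasDerivAt γ (F (γ t)) t

/-- A cycle: a non-constant `T`-periodic solution (with `T > 0`). -/
def IsCycle (F : ℝ × ℝ → ℝ × ℝ) (γ : ℝ → ℝ × ℝ) (T : ℝ) : Prop :=
  (∀ t, HasDerivAt γ (F (γ t)) t) ∧ 0 < T ∧ (∀ t, γ (t + T) = γ t) ∧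
    ∃ t₁ t₂, γ t₁ ≠ γ t₂

/-- A limit cycle: a cycle whose orbit has a neighbourhood containing no orbit
of any other cycle. -/
def IsLimitCycle (F : ℝ × ℝ → ℝ × ℝ) (γ : ℝ → ℝ × ℝ) (T : ℝ) : Prop :=
  IsCycle F γ T ∧
    ∃ U : Set (ℝ × ℝ), IsOpen U ∧ range γ ⊆ U ∧
      ∀ (γ' : ℝ → ℝ × ℝ) (T' : ℝ), IsCycle F γ' T' →
        range γ' ≠ range γ → ¬ range γ' ⊆ U

/-- There is a non-trivial positive semi-orbit of the system contained in `Z`. -/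
def HasSemiOrbitIn (F : ℝ × ℝ → ℝ × ℝ) (Z : Set (ℝ × ℝ)) : Prop :=
  ∃ (γ : ℝ → ℝ × ℝ) (t₀ : ℝ), IsSolOn F γ (Ici t₀) ∧
    (∃ t₁ ∈ Ici t₀, ∃ t₂ ∈ Ici t₀, γ t₁ ≠ γ t₂) ∧ γ '' Ici t₀ ⊆ Z

/-- There is a non-trivial (full) orbit of the system contained in `Z`. -/
def HasOrbitIn (F : ℝ × ℝ → ℝ × ℝ) (Z : Set (ℝ × ℝ)) : Prop :=
  ∃ γ : ℝ → ℝ × ℝ, (∀ t, HasDerivAt γ (F (γ t)) t) ∧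
    (∃ t₁ t₂, γ t₁ ≠ γ t₂) ∧ range γ ⊆ Z

/-- The vector field of system (S): ẋ = y, ẏ = −x − y·φ(x,y). -/
def phiVF (φ : ℝ × ℝ → ℝ) : ℝ × ℝ → ℝ × ℝ :=
  fun p => (p.2, -p.1 - p.2 * φ p)

/-- `G(x) = ∫₀ˣ g(s) ds`. -/
def Gfun (g : ℝ → ℝ) (x : ℝ) : ℝ := ∫ s in (0:ℝ)..x, g s

/-- The vector field of ẋ = y, ẏ = −g(x) − Σ_{k=0}^{N} f_{2k+1}(x) y^{2k+1},
where `o k` stands for `f_{2k+1}`. -/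
def gOddVF (g : ℝ → ℝ) (N : ℕ) (o : ℕ → ℝ → ℝ) : ℝ × ℝ → ℝ × ℝ :=
  fun p => (p.2, -g p.1 - ∑ k ∈ Finset.range (N + 1), o k p.1 * p.2 ^ (2 * k + 1))

/-- The divergence of `gOddVF g N o`. -/
def gOddDiv (N : ℕ) (o : ℕ → ℝ → ℝ) : ℝ × ℝ → ℝ :=
  fun p => -∑ k ∈ Finset.range (N + 1), (2 * (k : ℝ) + 1) * o k p.1 * p.2 ^ (2 * k)

/-- The left-hand side of condition (H_g^{2k+1}) for a coefficient `f`. -/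
def HgLHS (g : ℝ → ℝ) (k : ℕ) (f : ℝ → ℝ) (x : ℝ) : ℝ :=
  x * ((2 * (k : ℝ) + 1) * f x * g x
    + 2 * Gfun g x * (deriv f x * g x - f x * deriv g x) / g x)

/-!
In the coordinate `u = ±√(2G)` the system reads `u' = p y`, `y' = -p (u + y φ)`, a harmonic
oscillator with friction `φ` up to the time change by `p = du/dx > 0`, and condition `(H)` says that
`φ` is nondecreasing along the rays from the origin. Equivalently, if `X` is the vector field of the
system and `E` the radial field, then `[E, X] ∧ X ≥ 0`.

Along a cycle, `X ∧ E` divided by the expansion of area under the flow therefore increases. As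
`X ∧ E > 0` where the cycle meets the `x`-axis, the cycle always rotates clockwise, and comparing
the values one period apart gives `∫ div ≤ 0`. The logarithmic radii `R₁`, `R₂` of two cycles, as
functions of the angle, satisfy `((R₁ - R₂)²)' ≥ 0`, so this periodic function is constant.

Each cycle crosses the `y`-axis and hence passes through every small `x`. A strict inequality at one
such `x ≠ 0` makes the monotonicity strict there, which excludes both `∫ div = 0` and `R₁ ≠ R₂`.
-/

/-! ### Real functions and polar coordinates -/

section RealFunctions

lemma apply_eq_of_monotone_of_periodic {f : ℝ → ℝ} {c : ℝ} (hf : Monotone f)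
    (hper : Function.Periodic f c) (hc : c ≠ 0) (s t : ℝ) : f s = f t := by
  wlog hpos : 0 < c generalizing c
  · exact this hper.neg (neg_ne_zero.2 hc) (neg_pos.2 (lt_of_le_of_ne (not_lt.1 hpos) hc))
  have apply_le : ∀ s t, f s ≤ f t := fun s t => by
    obtain ⟨u, hu, hut⟩ := hper.exists_mem_Ico hpos t s
    exact hut ▸ hf hu.1
  exact le_antisymm (apply_le s t) (apply_le t s)

lemma deriv_eq_zero_of_monotone_of_periodic {f : ℝ → ℝ} {c d t : ℝ} (hf : Monotone f)
    (hper : Function.Periodic f c) (hc : c ≠ 0) (hd : HasDerivAt f d t) : d = 0 :=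
  hd.unique ((hasDerivAt_const t (f t)).congr_of_eventuallyEq
    (Eventually.of_forall fun s => apply_eq_of_monotone_of_periodic hf hper hc s t))

lemma deriv_eq_zero_of_const_on_uIcc {f : ℝ → ℝ} {x₁ x₂ d : ℝ} (hne : x₁ ≠ x₂)
    (hd : HasDerivAt f d x₁) (hconst : ∀ z ∈ uIcc x₁ x₂, f z = f x₁) : d = 0 :=
  (uniqueDiffOn_Icc (by simpa using hne.symm) x₁ left_mem_uIcc).eq_deriv _ hd.hasDerivWithinAt
    ((hasDerivWithinAt_const x₁ _ (f x₁)).congr hconst rfl)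

lemma apply_le_of_mem_uIcc_zero {f f' : ℝ → ℝ} {x₁ x₂ : ℝ} (hc : ContinuousOn f (uIcc 0 x₁))
    (hf : ∀ x ∈ uIoo 0 x₁, HasDerivAt f (f' x) x) (hf' : ∀ x ∈ uIoo 0 x₁, 0 ≤ x * f' x)
    (hx₂ : x₂ ∈ uIcc 0 x₁) : f x₂ ≤ f x₁ := by
  rcases le_total 0 x₁ with h | h
  · rw [uIcc_of_le h] at hc hx₂
    rw [uIoo_of_le h] at hf hf'
    refine monotoneOn_of_hasDerivWithinAt_nonneg (f' := f') (convex_Icc 0 x₁) hc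
      (fun x hx => ?_) (fun x hx => ?_) hx₂ (right_mem_Icc.2 h) hx₂.2 <;> rw [interior_Icc] at hx
    · exact (hf x hx).hasDerivWithinAt
    · exact nonneg_of_mul_nonneg_right (hf' x hx) hx.1
  · rw [uIcc_of_ge h] at hc hx₂
    rw [uIoo_of_ge h] at hf hf'
    refine antitoneOn_of_hasDerivWithinAt_nonpos (f' := f') (convex_Icc x₁ 0) hc
      (fun x hx => ?_) (fun x hx => ?_) (left_mem_Icc.2 h) hx₂ hx₂.1 <;> rw [interior_Icc] at hx
    · exact (hf x hx).hasDerivWithinAt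
    · exact nonpos_of_mul_nonneg_right (hf' x hx) hx.2

lemma surjective_of_map_add_const {f : ℝ → ℝ} {T c : ℝ} (hf : Continuous f) (hc : c ≠ 0)
    (hshift : ∀ t, f (t + T) = f t + c) : Function.Surjective f := by
  have map_int_mul (n : ℤ) : f (n * T) = f 0 + n * c := by
    simpa using AddConstMapClass.map_add_zsmul (AddConstMap.mk f hshift) 0 n
  intro z
  obtain ⟨n, hle, hlt⟩ : ∃ n : ℤ, (n : ℝ) ≤ (z - f 0) / c ∧ (z - f 0) / c < (n + 1 : ℤ) :=
    ⟨⌊(z - f 0) / c⌋, Int.floor_le _, by exact_mod_cast Int.lt_floor_add_one ((z - f 0) / c)⟩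
  rcases lt_or_gt_of_ne hc with hneg | hpos
  · rw [le_div_iff_of_neg hneg] at hle
    rw [div_lt_iff_of_neg hneg] at hlt
    exact mem_range_of_exists_le_of_exists_ge hf
      ⟨(n + 1 : ℤ) * T, by linarith [map_int_mul (n + 1)]⟩ ⟨n * T, by linarith [map_int_mul n]⟩
  · rw [le_div_iff₀ hpos] at hle
    rw [div_lt_iff₀ hpos] at hlt
    exact mem_range_of_exists_le_of_exists_ge hf
      ⟨n * T, by linarith [map_int_mul n]⟩ ⟨(n + 1 : ℤ) * T, by linarith [map_int_mul (n + 1)]⟩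

lemma exists_hasDerivAt_inverse_of_deriv_neg {f f' : ℝ → ℝ} (hf : ∀ t, HasDerivAt f (f' t) t)
    (hf' : ∀ t, f' t < 0) (hsurj : Function.Surjective f) :
    ∃ τ : ℝ → ℝ, Function.RightInverse τ f ∧ Function.LeftInverse τ f ∧
      ∀ θ, HasDerivAt τ (f' (τ θ))⁻¹ θ := by
  have hmono : StrictMono (-f) := (strictAnti_of_hasDerivAt_neg hf hf').neg
  let e := hmono.orderIsoOfSurjective _ (neg_surjective.comp hsurj)
  have right_inv : Function.RightInverse (fun θ => e.symm (-θ)) f := fun θ =>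
    neg_injective (e.apply_symm_apply (-θ))
  refine ⟨fun θ => e.symm (-θ), right_inv, e.symm_apply_apply, fun θ => ?_⟩
  exact (hf _).of_local_left_inverse (e.symm.continuous.comp continuous_neg).continuousAt
    (hf' _).ne (Eventually.of_forall right_inv)

end RealFunctions

section PolarParametrization

variable {z z' : ℝ → ℂ} {T : ℝ}

lemma exists_hasDerivAt_exp_eq (hz : ∀ t, HasDerivAt z (z' t) t) (hz' : Continuous z')
    (hz0 : ∀ t, z t ≠ 0) :
    ∃ L : ℝ → ℂ, (∀ t, HasDerivAt L (z' t / z t) t) ∧ ∀ t, Complex.exp (L t) = z t := by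
  have hcont : Continuous fun t => z' t / z t :=
    hz'.div (continuous_iff_continuousAt.2 fun t => (hz t).continuousAt) hz0
  set L : ℝ → ℂ := fun t => Complex.log (z 0) + ∫ s in (0 : ℝ)..t, z' s / z s with hL
  have hLd : ∀ t, HasDerivAt L (z' t / z t) t := fun t =>
    (hcont.integral_hasStrictDerivAt 0 t).hasDerivAt.const_add _
  have hquot : ∀ t, HasDerivAt (fun t => Complex.exp (-L t) * z t) 0 t := fun t => by
    refine ((hLd t).fun_neg.cexp.fun_mul (hz t)).congr_deriv ?_
    field_simp [hz0 t]
    ring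
  refine ⟨L, hLd, fun t => ?_⟩
  have hone : Complex.exp (-L t) * z t = 1 := by
    rw [is_const_of_deriv_eq_zero (fun t => (hquot t).differentiableAt)
      (fun t => (hquot t).deriv) t 0]
    simp [hL, Complex.exp_neg, Complex.exp_log (hz0 0), hz0 0]
  rw [Complex.exp_neg] at hone
  exact (inv_mul_eq_one₀ (Complex.exp_ne_zero _)).1 hone

lemma exists_add_period_eq_add_two_pi {L L' : ℝ → ℂ} (hL : ∀ t, HasDerivAt L (L' t) t)
    (hper : Function.Periodic (fun t => Complex.exp (L t)) T) (hper' : Function.Periodic L' T) :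
    ∃ n : ℤ, ∀ t, L (t + T) = L t + n * (2 * π * Complex.I) := by
  obtain ⟨n, hn⟩ : ∃ n : ℤ, L (0 + T) = L 0 + n * (2 * π * Complex.I) :=
    Complex.exp_eq_exp_iff_exists_int.1 (hper 0)
  have hdiff : ∀ t, HasDerivAt (fun t => L (t + T) - L t) 0 t := fun t =>
    (((hL (t + T)).comp_add_const t T).fun_sub (hL t)).congr_deriv
      (by rw [hper', sub_self])
  refine ⟨n, fun t => ?_⟩
  have hconst := is_const_of_deriv_eq_zero (fun t => (hdiff t).differentiableAt)
    (fun t => (hdiff t).deriv) t 0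
  rw [hn, add_sub_cancel_left, sub_eq_iff_eq_add'] at hconst
  exact hconst

/-- Polar parametrization of a plane curve `z`: at angle `θ` the curve passes, at time `τ θ`,
through `exp (R θ + i θ)`. The radius need only return after `n` turns, as `z` is not assumed
to be simple. -/
structure IsPolarParam (z : ℝ → ℂ) (R τ : ℝ → ℝ) (n : ℤ) : Prop where
  ne_zero : n ≠ 0
  surjective : Function.Surjective τ
  apply_eq : ∀ θ, z (τ θ) = Complex.exp (R θ + θ * Complex.I)
  periodic : Function.Periodic R (2 * π * n)

lemma exists_isPolarParam (hz : ∀ t, HasDerivAt z (z' t) t) (hz' : Continuous z')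
    (hz0 : ∀ t, z t ≠ 0) (hT : 0 < T) (hper : Function.Periodic z T)
    (hrot : ∀ t, (z' t / z t).im < 0) :
    ∃ R τ n, IsPolarParam z R τ n ∧
      ∀ θ, HasDerivAt R ((z' (τ θ) / z (τ θ)).re / (z' (τ θ) / z (τ θ)).im) θ := by
  obtain ⟨L, hL, hexp⟩ := exists_hasDerivAt_exp_eq hz hz' hz0
  have hper' : Function.Periodic z' T := fun t =>
    (((hz (t + T)).comp_add_const t T).congr_of_eventuallyEq
      (Eventually.of_forall fun s => (hper s).symm)).unique (hz t)
  obtain ⟨n, hn⟩ := exists_add_period_eq_add_two_pi hL (T := T)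
    (by simpa only [hexp] using hper) fun t => by rw [hper, hper']
  have hre : ∀ t, HasDerivAt (fun t => (L t).re) (z' t / z t).re t := fun t =>
    Complex.reCLM.hasFDerivAt.comp_hasDerivAt t (hL t)
  have him : ∀ t, HasDerivAt (fun t => (L t).im) (z' t / z t).im t := fun t =>
    Complex.imCLM.hasFDerivAt.comp_hasDerivAt t (hL t)
  have hre_shift : ∀ t, (L (t + T)).re = (L t).re := fun t => by simp [hn]
  have him_shift : ∀ t, (L (t + T)).im = (L t).im + 2 * π * n := fun t => by
    simp only [hn, Complex.add_im, Complex.mul_im, Complex.intCast_re, Complex.intCast_im]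
    simp [mul_comm]
  have hturn : 2 * π * (n : ℝ) ≠ 0 := fun h0 => by
    have := strictAnti_of_hasDerivAt_neg him hrot (lt_add_of_pos_right 0 hT)
    linarith [him_shift 0]
  obtain ⟨τ, hright : ∀ θ, (L (τ θ)).im = θ, hleft : ∀ t, τ (L t).im = t, hτ⟩ :=
    exists_hasDerivAt_inverse_of_deriv_neg him hrot (surjective_of_map_add_const
      (continuous_iff_continuousAt.2 fun t => (him t).continuousAt) hturn him_shift)
  refine ⟨fun θ => (L (τ θ)).re, τ, n, ⟨by simpa using right_ne_zero_of_mul hturn,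
    fun t => ⟨_, hleft t⟩, fun θ => ?_, fun θ => ?_⟩, fun θ => (hre _).comp θ (hτ θ)⟩
  · conv_lhs => rw [← hexp, ← Complex.re_add_im (L (τ θ)), hright θ]
  · have hshift : τ (θ + 2 * π * n) = τ θ + T := by
      rw [← hleft (τ θ + T), him_shift, hright]
    simp only [hshift, hre_shift]

end PolarParametrization

/-! ### The normalizing coordinate -/

/-- `g` is the restoring force of a nondegenerate center at the origin, on the strip `(a, b)`. -/
structure IsRestoringForce (a b : ℝ) (g : ℝ → ℝ) : Prop where
  left_neg : a < 0
  right_pos : 0 < b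
  differentiableOn : DifferentiableOn ℝ g (Ioo a b)
  deriv_zero_pos : 0 < deriv g 0
  mul_pos : ∀ x ∈ Ioo a b, x ≠ 0 → 0 < x * g x

/-- The `x`-component `2G/g` of the radial field `(2G/g) ∂ₓ + y ∂_y`, which generates the dilations
of the plane in the coordinates `(normalCoord g x, y)`. At `x = 0` the quotient is `0 / 0 = 0`,
which is also its limit there. -/
def radialCoeff (g : ℝ → ℝ) (x : ℝ) : ℝ := 2 * Gfun g x / g x

/-- The coordinate `u` with `u² = 2G(x)` and the sign of `x`: it turns the potential energy `G`
into that of the harmonic oscillator. -/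
def normalCoord (g : ℝ → ℝ) (x : ℝ) : ℝ := SignType.sign x * √(2 * Gfun g x)

@[simp]
lemma Gfun_zero (g : ℝ → ℝ) : Gfun g 0 = 0 := integral_same

@[simp]
lemma normalCoord_zero (g : ℝ → ℝ) : normalCoord g 0 = 0 := by simp [normalCoord]

@[simp]
lemma radialCoeff_zero (g : ℝ → ℝ) : radialCoeff g 0 = 0 := by simp [radialCoeff]

namespace IsRestoringForce

variable {a b : ℝ} {g : ℝ → ℝ} {x : ℝ}

lemma zero_mem (hg : IsRestoringForce a b g) : (0 : ℝ) ∈ Ioo a b := ⟨hg.left_neg, hg.right_pos⟩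

lemma uIcc_zero_subset (hg : IsRestoringForce a b g) (hx : x ∈ Ioo a b) : uIcc 0 x ⊆ Ioo a b :=
  ordConnected_Ioo.uIcc_subset hg.zero_mem hx

lemma hasDerivAt (hg : IsRestoringForce a b g) (hx : x ∈ Ioo a b) : HasDerivAt g (deriv g x) x :=
  (hg.differentiableOn.differentiableAt (isOpen_Ioo.mem_nhds hx)).hasDerivAt

lemma eventually_mem (hg : IsRestoringForce a b g) : ∀ᶠ x in 𝓝[≠] (0 : ℝ), x ∈ Ioo a b :=
  mem_nhdsWithin_of_mem_nhds (isOpen_Ioo.mem_nhds hg.zero_mem)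

lemma ne_zero (hg : IsRestoringForce a b g) (hx : x ∈ Ioo a b) (hx0 : x ≠ 0) : g x ≠ 0 :=
  right_ne_zero_of_mul (hg.mul_pos x hx hx0).ne'

lemma apply_zero (hg : IsRestoringForce a b g) : g 0 = 0 := by
  have hmin : IsLocalMin (fun x => x * g x) 0 := by
    filter_upwards [isOpen_Ioo.mem_nhds hg.zero_mem] with x hx
    rcases eq_or_ne x 0 with rfl | hx0
    · rfl
    · simpa using (hg.mul_pos x hx hx0).le
  simpa using hmin.hasDerivAt_eq_zero ((hasDerivAt_id' 0).fun_mul (hg.hasDerivAt hg.zero_mem))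

lemma tendsto_div_self (hg : IsRestoringForce a b g) :
    Tendsto (fun x => g x / x) (𝓝[≠] 0) (𝓝 (deriv g 0)) :=
  (hasDerivAt_iff_tendsto_slope.1 (hg.hasDerivAt hg.zero_mem)).congr fun x => by
    simp [slope_def_field, hg.apply_zero]

lemma hasDerivAt_Gfun (hg : IsRestoringForce a b g) (hx : x ∈ Ioo a b) :
    HasDerivAt (Gfun g) (g x) x := by
  have hcont := hg.differentiableOn.continuousOn
  exact integral_hasDerivAt_right (hcont.mono (hg.uIcc_zero_subset hx)).intervalIntegrable
    (hcont.stronglyMeasurableAtFilter isOpen_Ioo x hx) (hg.hasDerivAt hx).continuousAt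

lemma Gfun_pos (hg : IsRestoringForce a b g) (hx : x ∈ Ioo a b) (hx0 : x ≠ 0) :
    0 < Gfun g x := by
  have hintg : IntervalIntegrable g MeasureTheory.volume 0 x :=
    (hg.differentiableOn.continuousOn.mono (hg.uIcc_zero_subset hx)).intervalIntegrable
  rcases lt_or_gt_of_ne hx0 with hneg | hpos
  · rw [Gfun, integral_symm, ← integral_neg]
    refine intervalIntegral_pos_of_pos_on hintg.symm.neg (fun s hs => ?_) hneg
    exact neg_pos.2 (neg_of_mul_pos_right
      (hg.mul_pos s ⟨hx.1.trans hs.1, hs.2.trans hg.right_pos⟩ hs.2.ne) hs.2.le)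
  · refine intervalIntegral_pos_of_pos_on hintg (fun s hs => ?_) hpos
    exact pos_of_mul_pos_right
      (hg.mul_pos s ⟨hg.left_neg.trans hs.1, hs.2.trans hx.2⟩ hs.1.ne') hs.1.le

lemma Gfun_nonneg (hg : IsRestoringForce a b g) (hx : x ∈ Ioo a b) : 0 ≤ Gfun g x := by
  rcases eq_or_ne x 0 with rfl | hx0
  · exact (Gfun_zero g).ge
  · exact (hg.Gfun_pos hx hx0).le

lemma tendsto_two_mul_Gfun_div_sq (hg : IsRestoringForce a b g) :
    Tendsto (fun x => 2 * Gfun g x / x ^ 2) (𝓝[≠] 0) (𝓝 (deriv g 0)) := by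
  refine HasDerivAt.lhopital_zero_nhdsNE (f' := fun x => 2 * g x) (g' := fun x => 2 * x)
    ?_ (Eventually.of_forall fun x => by simpa using hasDerivAt_pow 2 x)
    (eventually_mem_nhdsWithin.mono fun x hx => by simpa using hx) ?_ ?_ ?_
  · exact hg.eventually_mem.mono fun x hx => (hg.hasDerivAt_Gfun hx).const_mul 2
  · simpa using ((hg.hasDerivAt_Gfun hg.zero_mem).continuousAt.tendsto.const_mul 2).mono_left
      (nhdsWithin_le_nhds (s := {0}ᶜ))
  · simpa using ((continuous_pow (M := ℝ) 2).tendsto 0).mono_left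
      (nhdsWithin_le_nhds (s := {0}ᶜ))
  · exact hg.tendsto_div_self.congr fun x => (mul_div_mul_left _ _ two_ne_zero).symm

section RadialCoeff

lemma hasDerivAt_radialCoeff_of_ne (hg : IsRestoringForce a b g) (hx : x ∈ Ioo a b)
    (hx0 : x ≠ 0) : HasDerivAt (radialCoeff g) (2 - 2 * Gfun g x * deriv g x / g x ^ 2) x := by
  have hgx := hg.ne_zero hx hx0
  refine (((hg.hasDerivAt_Gfun hx).const_mul 2).fun_div (hg.hasDerivAt hx) hgx).congr_deriv ?_
  field_simp

lemma hasDerivAt_radialCoeff_zero (hg : IsRestoringForce a b g) :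
    HasDerivAt (radialCoeff g) 1 0 := by
  have hlim := hg.tendsto_two_mul_Gfun_div_sq.div hg.tendsto_div_self hg.deriv_zero_pos.ne'
  rw [div_self hg.deriv_zero_pos.ne'] at hlim
  refine hasDerivAt_iff_tendsto_slope.2 (hlim.congr' ?_)
  filter_upwards [self_mem_nhdsWithin] with x (hx : x ≠ 0)
  rw [slope_def_field, radialCoeff_zero, sub_zero, sub_zero, radialCoeff, Pi.div_apply]
  field_simp

lemma hasDerivAt_radialCoeff (hg : IsRestoringForce a b g) (hx : x ∈ Ioo a b) :
    HasDerivAt (radialCoeff g) (deriv (radialCoeff g) x) x := by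
  rcases eq_or_ne x 0 with rfl | hx0
  · exact hg.hasDerivAt_radialCoeff_zero.differentiableAt.hasDerivAt
  · exact (hg.hasDerivAt_radialCoeff_of_ne hx hx0).differentiableAt.hasDerivAt

lemma radialCoeff_mul_deriv (hg : IsRestoringForce a b g) (hx : x ∈ Ioo a b) :
    radialCoeff g x * deriv g x = (2 - deriv (radialCoeff g) x) * g x := by
  rcases eq_or_ne x 0 with rfl | hx0
  · simp [hg.apply_zero]
  · have hgx := hg.ne_zero hx hx0
    rw [(hg.hasDerivAt_radialCoeff_of_ne hx hx0).deriv, radialCoeff]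
    field_simp
    ring

end RadialCoeff

section NormalCoord

lemma normalCoord_sq (hg : IsRestoringForce a b g) (hx : x ∈ Ioo a b) :
    normalCoord g x ^ 2 = 2 * Gfun g x := by
  rcases eq_or_ne x 0 with rfl | hx0
  · simp
  · rw [normalCoord, mul_pow, Real.sq_sqrt (mul_nonneg two_pos.le (hg.Gfun_nonneg hx)), sq,
      ← SignType.coe_mul, ← sign_mul, sign_pos (mul_self_pos.2 hx0), SignType.coe_one, one_mul]

lemma mul_normalCoord_pos (hg : IsRestoringForce a b g) (hx : x ∈ Ioo a b) (hx0 : x ≠ 0) :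
    0 < x * normalCoord g x := by
  rw [normalCoord, ← mul_assoc, self_mul_sign]
  exact _root_.mul_pos (abs_pos.2 hx0)
    (Real.sqrt_pos.2 (_root_.mul_pos two_pos (hg.Gfun_pos hx hx0)))

lemma normalCoord_ne_zero (hg : IsRestoringForce a b g) (hx : x ∈ Ioo a b) (hx0 : x ≠ 0) :
    normalCoord g x ≠ 0 :=
  right_ne_zero_of_mul (hg.mul_normalCoord_pos hx hx0).ne'

lemma tendsto_normalCoord_div_self (hg : IsRestoringForce a b g) :
    Tendsto (fun x => normalCoord g x / x) (𝓝[≠] 0) (𝓝 √(deriv g 0)) := by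
  refine ((Real.continuous_sqrt.tendsto _).comp hg.tendsto_two_mul_Gfun_div_sq).congr' ?_
  filter_upwards [self_mem_nhdsWithin, hg.eventually_mem] with x (hx0 : x ≠ 0) hx
  have hnonneg : 0 ≤ normalCoord g x / x := by
    rw [← mul_div_mul_left _ _ hx0, ← sq]
    exact div_nonneg (hg.mul_normalCoord_pos hx hx0).le (sq_nonneg x)
  rw [Function.comp_apply, ← hg.normalCoord_sq hx, ← div_pow, Real.sqrt_sq hnonneg]

lemma hasDerivAt_normalCoord_zero (hg : IsRestoringForce a b g) :
    HasDerivAt (normalCoord g) √(deriv g 0) 0 :=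
  hasDerivAt_iff_tendsto_slope.2 <| hg.tendsto_normalCoord_div_self.congr fun x => by
    simp [slope_def_field]

lemma hasDerivAt_normalCoord_of_ne (hg : IsRestoringForce a b g) (hx : x ∈ Ioo a b)
    (hx0 : x ≠ 0) : HasDerivAt (normalCoord g) (g x / normalCoord g x) x := by
  have hlocal : normalCoord g =ᶠ[𝓝 x] fun s => SignType.sign x * √(2 * Gfun g s) :=
    ((continuousAt_sign_of_ne_zero hx0).eventually_mem
      ((isOpen_discrete {SignType.sign x}).mem_nhds rfl)).mono fun s hs => by
      rw [normalCoord, hs]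
  have hG : 2 * Gfun g x ≠ 0 := mul_ne_zero two_ne_zero (hg.Gfun_pos hx hx0).ne'
  refine (((((hg.hasDerivAt_Gfun hx).const_mul 2).sqrt hG).const_mul
    _).congr_of_eventuallyEq hlocal).congr_deriv ?_
  have hsq := hg.normalCoord_sq hx
  have hsqrt := Real.sqrt_ne_zero'.2 (_root_.mul_pos two_pos (hg.Gfun_pos hx hx0))
  rw [normalCoord, mul_pow, Real.sq_sqrt (mul_nonneg two_pos.le (hg.Gfun_nonneg hx))] at hsq
  have hsign := mul_right_cancel₀ hG (hsq.trans (one_mul _).symm)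
  rw [eq_div_iff (hg.normalCoord_ne_zero hx hx0), normalCoord]
  field_simp
  rw [hsign, one_mul]

lemma hasDerivAt_normalCoord (hg : IsRestoringForce a b g) (hx : x ∈ Ioo a b) :
    HasDerivAt (normalCoord g) (deriv (normalCoord g) x) x := by
  rcases eq_or_ne x 0 with rfl | hx0
  · exact hg.hasDerivAt_normalCoord_zero.differentiableAt.hasDerivAt
  · exact (hg.hasDerivAt_normalCoord_of_ne hx hx0).differentiableAt.hasDerivAt

lemma deriv_normalCoord_mul (hg : IsRestoringForce a b g) (hx : x ∈ Ioo a b) :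
    deriv (normalCoord g) x * normalCoord g x = g x := by
  rcases eq_or_ne x 0 with rfl | hx0
  · simp [hg.apply_zero]
  · rw [(hg.hasDerivAt_normalCoord_of_ne hx hx0).deriv,
      div_mul_cancel₀ _ (hg.normalCoord_ne_zero hx hx0)]

lemma deriv_normalCoord_pos (hg : IsRestoringForce a b g) (hx : x ∈ Ioo a b) :
    0 < deriv (normalCoord g) x := by
  rcases eq_or_ne x 0 with rfl | hx0
  · rw [hg.hasDerivAt_normalCoord_zero.deriv]
    exact Real.sqrt_pos.2 hg.deriv_zero_pos
  · rw [(hg.hasDerivAt_normalCoord_of_ne hx hx0).deriv, ← mul_div_mul_left _ _ hx0]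
    exact div_pos (hg.mul_pos x hx hx0) (hg.mul_normalCoord_pos hx hx0)

lemma radialCoeff_mul_deriv_normalCoord (hg : IsRestoringForce a b g) (hx : x ∈ Ioo a b) :
    radialCoeff g x * deriv (normalCoord g) x = normalCoord g x := by
  rcases eq_or_ne x 0 with rfl | hx0
  · simp
  · have hgx := hg.ne_zero hx hx0
    have hUx := hg.normalCoord_ne_zero hx hx0
    rw [(hg.hasDerivAt_normalCoord_of_ne hx hx0).deriv, radialCoeff, ← hg.normalCoord_sq hx]
    field_simp

lemma continuousOn_normalCoord (hg : IsRestoringForce a b g) :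
    ContinuousOn (normalCoord g) (Ioo a b) := fun _ hx =>
  (hg.hasDerivAt_normalCoord hx).continuousAt.continuousWithinAt

lemma tendsto_deriv_normalCoord_zero (hg : IsRestoringForce a b g) :
    Tendsto (deriv (normalCoord g)) (𝓝[≠] 0) (𝓝 √(deriv g 0)) := by
  have hlim := hg.tendsto_div_self.div hg.tendsto_normalCoord_div_self
    (Real.sqrt_ne_zero'.2 hg.deriv_zero_pos)
  rw [Real.div_sqrt] at hlim
  refine hlim.congr' ?_
  filter_upwards [self_mem_nhdsWithin, hg.eventually_mem] with x (hx0 : x ≠ 0) hx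
  rw [(hg.hasDerivAt_normalCoord_of_ne hx hx0).deriv, Pi.div_apply, div_div_div_cancel_right₀ hx0]

lemma continuousOn_deriv_normalCoord (hg : IsRestoringForce a b g) :
    ContinuousOn (deriv (normalCoord g)) (Ioo a b) := fun x hx => by
  apply ContinuousAt.continuousWithinAt
  rcases eq_or_ne x 0 with rfl | hx0
  · rw [continuousAt_iff_punctured_nhds, hg.hasDerivAt_normalCoord_zero.deriv]
    exact hg.tendsto_deriv_normalCoord_zero
  · refine ((hg.hasDerivAt hx).continuousAt.div (hg.hasDerivAt_normalCoord hx).continuousAt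
      (hg.normalCoord_ne_zero hx hx0)).congr ?_
    filter_upwards [isOpen_ne.mem_nhds hx0, isOpen_Ioo.mem_nhds hx] with s hs0 hs
    exact (hg.hasDerivAt_normalCoord_of_ne hs hs0).deriv.symm

lemma strictMonoOn_normalCoord (hg : IsRestoringForce a b g) :
    StrictMonoOn (normalCoord g) (Ioo a b) :=
  strictMonoOn_of_deriv_pos (convex_Ioo a b) hg.continuousOn_normalCoord fun _ hx =>
    hg.deriv_normalCoord_pos (interior_subset hx)

end NormalCoord

end IsRestoringForce

/-! ### Friction along rays -/

/-- `f` is differentiable on `(a, b)` and satisfies condition `(H_g^{2k+1})` there. -/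
structure SatisfiesHg (a b : ℝ) (g : ℝ → ℝ) (k : ℕ) (f : ℝ → ℝ) : Prop where
  differentiableOn : DifferentiableOn ℝ f (Ioo a b)
  HgLHS_nonneg : ∀ x ∈ Ioo a b, x ≠ 0 → 0 ≤ HgLHS g k f x

/-- The coefficient of `y ^ (2k+2)` in the wedge product `[E, X] ∧ X`, where `X` is the vector field
of the system, `f` its `(2k+1)`-st coefficient, and `E = (2G/g) ∂ₓ + y ∂_y` the radial field.
Condition `(H_g^{2k+1})` says that it is nonnegative. -/
def bracketCoeff (g : ℝ → ℝ) (k : ℕ) (f : ℝ → ℝ) (x : ℝ) : ℝ :=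
  radialCoeff g x * deriv f x + (2 * k - 1 + deriv (radialCoeff g) x) * f x

/-- The friction term `f(x) y ^ (2k)`, measured in the coordinate `u = normalCoord g x`, along the
diagonal `y = u`. -/
def diagonalFriction (g : ℝ → ℝ) (k : ℕ) (f : ℝ → ℝ) (x : ℝ) : ℝ :=
  f x / deriv (normalCoord g) x * normalCoord g x ^ (2 * k)

lemma IsRestoringForce.bracketCoeff_eq_div {a b : ℝ} {g : ℝ → ℝ} {x : ℝ}
    (hg : IsRestoringForce a b g) (hx : x ∈ Ioo a b) (hx0 : x ≠ 0) (k : ℕ) (f : ℝ → ℝ) :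
    bracketCoeff g k f x = HgLHS g k f x / (x * g x) := by
  have hgx := hg.ne_zero hx hx0
  rw [bracketCoeff, HgLHS, (hg.hasDerivAt_radialCoeff_of_ne hx hx0).deriv, radialCoeff]
  field_simp
  ring

namespace SatisfiesHg

variable {a b : ℝ} {g f : ℝ → ℝ} {k : ℕ} {x x₁ x₂ : ℝ}

lemma hasDerivAt (hf : SatisfiesHg a b g k f) (hx : x ∈ Ioo a b) :
    HasDerivAt f (deriv f x) x :=
  (hf.differentiableOn.differentiableAt (isOpen_Ioo.mem_nhds hx)).hasDerivAt

lemma bracketCoeff_nonneg_of_ne (hf : SatisfiesHg a b g k f) (hg : IsRestoringForce a b g)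
    (hx : x ∈ Ioo a b) (hx0 : x ≠ 0) : 0 ≤ bracketCoeff g k f x := by
  rw [hg.bracketCoeff_eq_div hx hx0]
  exact div_nonneg (hf.HgLHS_nonneg x hx hx0) (hg.mul_pos x hx hx0).le

lemma continuousOn_diagonalFriction (hf : SatisfiesHg a b g k f) (hg : IsRestoringForce a b g) :
    ContinuousOn (diagonalFriction g k f) (Ioo a b) :=
  (hf.differentiableOn.continuousOn.div hg.continuousOn_deriv_normalCoord
    fun _ hx => (hg.deriv_normalCoord_pos hx).ne').mul (hg.continuousOn_normalCoord.pow _)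

lemma hasDerivAt_diagonalFriction (hf : SatisfiesHg a b g k f) (hg : IsRestoringForce a b g)
    (hx : x ∈ Ioo a b) (hx0 : x ≠ 0) :
    HasDerivAt (diagonalFriction g k f)
      (normalCoord g x ^ (2 * k) / normalCoord g x * bracketCoeff g k f x) x := by
  have hgx := hg.ne_zero hx hx0
  have hUx := hg.normalCoord_ne_zero hx hx0
  have hlocal : diagonalFriction g k f =ᶠ[𝓝 x]
      fun s => f s * normalCoord g s ^ (2 * k + 1) / g s := by
    filter_upwards [isOpen_ne.mem_nhds hx0, isOpen_Ioo.mem_nhds hx] with s hs0 hs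
    rw [diagonalFriction, (hg.hasDerivAt_normalCoord_of_ne hs hs0).deriv, pow_succ]
    field_simp
  refine ((((hf.hasDerivAt hx).fun_mul ((hg.hasDerivAt_normalCoord_of_ne hx hx0).fun_pow
    (2 * k + 1))).fun_div (hg.hasDerivAt hx) hgx).congr_of_eventuallyEq hlocal).congr_deriv ?_
  rw [bracketCoeff, (hg.hasDerivAt_radialCoeff_of_ne hx hx0).deriv, radialCoeff,
    ← hg.normalCoord_sq hx, add_tsub_cancel_right, pow_succ]
  field_simp
  push_cast
  ring

lemma diagonalFriction_le (hf : SatisfiesHg a b g k f) (hg : IsRestoringForce a b g)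
    (hx₁ : x₁ ∈ Ioo a b) (hx₂ : x₂ ∈ uIcc 0 x₁) :
    diagonalFriction g k f x₂ ≤ diagonalFriction g k f x₁ := by
  have hsub := hg.uIcc_zero_subset hx₁
  have hmem : ∀ x ∈ uIoo 0 x₁, x ∈ Ioo a b := fun x hx => hsub (uIoo_subset_uIcc_self hx)
  have hne : ∀ x ∈ uIoo 0 x₁, x ≠ 0 := by
    rintro x hx rfl
    simp only [uIoo, mem_Ioo, inf_lt_left, left_lt_sup, not_le] at hx
    exact lt_asymm hx.1 hx.2
  refine apply_le_of_mem_uIcc_zero ((hf.continuousOn_diagonalFriction hg).mono hsub)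
    (fun x hx => hf.hasDerivAt_diagonalFriction hg (hmem x hx) (hne x hx)) (fun x hx => ?_) hx₂
  have hxU := hg.mul_normalCoord_pos (hmem x hx) (hne x hx)
  have hU := hg.normalCoord_ne_zero (hmem x hx) (hne x hx)
  have hbracket := hf.bracketCoeff_nonneg_of_ne hg (hmem x hx) (hne x hx)
  calc 0 ≤ x * normalCoord g x / normalCoord g x ^ 2 *
        ((normalCoord g x ^ k) ^ 2 * bracketCoeff g k f x) := by positivity
    _ = x * (normalCoord g x ^ (2 * k) / normalCoord g x * bracketCoeff g k f x) := by
        field_simp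
        ring

lemma apply_nonneg_of_ne (hf : SatisfiesHg a b g k f) (hg : IsRestoringForce a b g) (hk : k ≠ 0)
    (hx : x ∈ Ioo a b) (hx0 : x ≠ 0) : 0 ≤ f x := by
  have hle := hf.diagonalFriction_le hg hx left_mem_uIcc
  have hzero : diagonalFriction g k f 0 = 0 := by simp [diagonalFriction, hk]
  rw [hzero, diagonalFriction] at hle
  have hpow : 0 < normalCoord g x ^ (2 * k) := by
    rw [pow_mul]
    exact pow_pos (sq_pos_of_ne_zero (hg.normalCoord_ne_zero hx hx0)) k
  simpa using (le_div_iff₀ (hg.deriv_normalCoord_pos hx)).1 (nonneg_of_mul_nonneg_left hle hpow)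

lemma apply_zero_nonneg (hf : SatisfiesHg a b g k f) (hg : IsRestoringForce a b g)
    (hk : k ≠ 0) : 0 ≤ f 0 := by
  refine ge_of_tendsto ((hf.hasDerivAt hg.zero_mem).continuousAt.mono_left
    (nhdsWithin_le_nhds (s := {0}ᶜ))) ?_
  filter_upwards [self_mem_nhdsWithin, hg.eventually_mem] with x hx0 hx
  exact hf.apply_nonneg_of_ne hg hk hx hx0

lemma bracketCoeff_nonneg (hf : SatisfiesHg a b g k f) (hg : IsRestoringForce a b g)
    (hx : x ∈ Ioo a b) : 0 ≤ bracketCoeff g k f x := by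
  rcases eq_or_ne x 0 with rfl | hx0
  · rw [bracketCoeff, radialCoeff_zero, hg.hasDerivAt_radialCoeff_zero.deriv]
    rcases eq_or_ne k 0 with rfl | hk
    · simp
    · have := hf.apply_zero_nonneg hg hk
      simp only [zero_mul, zero_add, sub_add_cancel]
      positivity
  · exact hf.bracketCoeff_nonneg_of_ne hg hx hx0

end SatisfiesHg

section RayComparison

variable {a b : ℝ} {g f : ℝ → ℝ} {k : ℕ} {x₁ x₂ r₁ r₂ c s : ℝ}

lemma IsRestoringForce.mem_uIcc_zero_of_normalCoord_eq_mul (hg : IsRestoringForce a b g)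
    (hx₁ : x₁ ∈ Ioo a b) (hx₂ : x₂ ∈ Ioo a b) (hr₂ : 0 ≤ r₂) (hr : r₂ ≤ r₁)
    (h₁ : normalCoord g x₁ = r₁ * c) (h₂ : normalCoord g x₂ = r₂ * c) : x₂ ∈ uIcc 0 x₁ := by
  have hle {x x' : ℝ} (hx : x ∈ Ioo a b) (hx' : x' ∈ Ioo a b)
      (h : normalCoord g x ≤ normalCoord g x') : x ≤ x' :=
    (hg.strictMonoOn_normalCoord.le_iff_le hx hx').1 h
  have h0 := hg.zero_mem
  rcases le_total 0 c with hc | hc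
  · refine mem_uIcc_of_le (hle h0 hx₂ ?_) (hle hx₂ hx₁ ?_)
    · rw [normalCoord_zero, h₂]
      exact mul_nonneg hr₂ hc
    · rw [h₁, h₂]
      exact mul_le_mul_of_nonneg_right hr hc
  · refine mem_uIcc_of_ge (hle hx₁ hx₂ ?_) (hle hx₂ h0 ?_)
    · rw [h₁, h₂]
      exact mul_le_mul_of_nonpos_right hr hc
    · rw [normalCoord_zero, h₂]
      exact mul_nonpos_of_nonneg_of_nonpos hr₂ hc

lemma friction_eq_diagonalFriction_mul {x r : ℝ} (h : normalCoord g x = r * c) (hc : c ≠ 0) :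
    f x / deriv (normalCoord g) x * (r * s) ^ (2 * k) =
      diagonalFriction g k f x * (s / c) ^ (2 * k) := by
  rw [diagonalFriction, h, mul_assoc, ← mul_pow, mul_assoc, mul_div_cancel₀ s hc]

namespace SatisfiesHg

lemma friction_le_friction_of_ray (hf : SatisfiesHg a b g k f) (hg : IsRestoringForce a b g)
    (hx₁ : x₁ ∈ Ioo a b) (hx₂ : x₂ ∈ Ioo a b) (hr₂ : 0 ≤ r₂) (hr : r₂ ≤ r₁)
    (h₁ : normalCoord g x₁ = r₁ * c) (h₂ : normalCoord g x₂ = r₂ * c) :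
    f x₂ / deriv (normalCoord g) x₂ * (r₂ * s) ^ (2 * k) ≤
      f x₁ / deriv (normalCoord g) x₁ * (r₁ * s) ^ (2 * k) := by
  rcases eq_or_ne c 0 with rfl | hc
  · have eq_zero {x : ℝ} (hx : x ∈ Ioo a b) (h : normalCoord g x = 0) : x = 0 :=
      not_not.1 fun hx0 => hg.normalCoord_ne_zero hx hx0 h
    obtain rfl := eq_zero hx₁ (h₁.trans (mul_zero _))
    obtain rfl := eq_zero hx₂ (h₂.trans (mul_zero _))
    rcases eq_or_ne k 0 with rfl | hk
    · simp
    · have hp := hg.deriv_normalCoord_pos hx₁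
      have hf0 := hf.apply_zero_nonneg hg hk
      rw [mul_pow, mul_pow]
      have := (even_two_mul k).pow_nonneg s
      gcongr
  · rw [friction_eq_diagonalFriction_mul h₁ hc, friction_eq_diagonalFriction_mul h₂ hc]
    exact mul_le_mul_of_nonneg_right (hf.diagonalFriction_le hg hx₁
      (hg.mem_uIcc_zero_of_normalCoord_eq_mul hx₁ hx₂ hr₂ hr h₁ h₂))
      ((even_two_mul k).pow_nonneg _)

lemma bracketCoeff_eq_zero_of_friction_eq (hf : SatisfiesHg a b g k f)
    (hg : IsRestoringForce a b g) (hx₁ : x₁ ∈ Ioo a b) (hx₂ : x₂ ∈ Ioo a b) (hr₂ : 0 ≤ r₂)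
    (hr : r₂ < r₁) (hc : c ≠ 0) (hs : s ≠ 0)
    (h₁ : normalCoord g x₁ = r₁ * c) (h₂ : normalCoord g x₂ = r₂ * c)
    (heq : f x₂ / deriv (normalCoord g) x₂ * (r₂ * s) ^ (2 * k) =
      f x₁ / deriv (normalCoord g) x₁ * (r₁ * s) ^ (2 * k)) : bracketCoeff g k f x₁ = 0 := by
  rw [friction_eq_diagonalFriction_mul h₁ hc, friction_eq_diagonalFriction_mul h₂ hc] at heq
  have hends := mul_right_cancel₀ (pow_ne_zero _ (div_ne_zero hs hc)) heq
  have hx₂_mem := hg.mem_uIcc_zero_of_normalCoord_eq_mul hx₁ hx₂ hr₂ hr.le h₁ h₂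
  have hne : x₁ ≠ x₂ := by
    rintro rfl
    exact hr.ne (mul_right_cancel₀ hc (h₂.symm.trans h₁))
  have hx₁0 : x₁ ≠ 0 := by
    rintro rfl
    rw [uIcc_self, mem_singleton_iff] at hx₂_mem
    exact hne hx₂_mem.symm
  have hconst : ∀ z ∈ uIcc x₁ x₂, diagonalFriction g k f z = diagonalFriction g k f x₁ := by
    intro z hz
    have hz₁ : z ∈ uIcc 0 x₁ := uIcc_subset_uIcc right_mem_uIcc hx₂_mem hz
    have hz₂ : x₂ ∈ uIcc 0 z := by
      simp only [mem_uIcc] at hz hx₂_mem ⊢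
      grind
    exact le_antisymm (hf.diagonalFriction_le hg hx₁ hz₁)
      (hends.symm.trans_le (hf.diagonalFriction_le hg (hg.uIcc_zero_subset hx₁ hz₁) hz₂))
  have hderiv := deriv_eq_zero_of_const_on_uIcc hne
    (hf.hasDerivAt_diagonalFriction hg hx₁ hx₁0) hconst
  have hU := hg.normalCoord_ne_zero hx₁ hx₁0
  exact (mul_eq_zero_iff_left (div_ne_zero (pow_ne_zero _ hU) hU)).1 hderiv

end SatisfiesHg

end RayComparison

/-- The coefficient `φ` for which the system becomes `u' = p y`, `y' = -p (u + y φ)` in the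
coordinates `(u, y)`, where `u = normalCoord g x` and `p = du/dx`. -/
def normalFriction (g : ℝ → ℝ) (N : ℕ) (o : ℕ → ℝ → ℝ) (q : ℝ × ℝ) : ℝ :=
  ∑ k ∈ Finset.range (N + 1), o k q.1 / deriv (normalCoord g) q.1 * q.2 ^ (2 * k)

/-- The wedge product of the vector field of the system with the radial field
`(2G/g) ∂ₓ + y ∂_y`. It is positive where the system rotates clockwise. -/
def radialWedge (g : ℝ → ℝ) (N : ℕ) (o : ℕ → ℝ → ℝ) (q : ℝ × ℝ) : ℝ :=
  q.2 ^ 2 - radialCoeff g q.1 * (gOddVF g N o q).2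

section VectorField

variable {a b : ℝ} {g : ℝ → ℝ} {N : ℕ} {o : ℕ → ℝ → ℝ} {q : ℝ × ℝ}

lemma IsRestoringForce.gOddVF_snd (hg : IsRestoringForce a b g) (hq : q.1 ∈ Ioo a b) :
    (gOddVF g N o q).2 =
      -(deriv (normalCoord g) q.1 * (normalCoord g q.1 + q.2 * normalFriction g N o q)) := by
  have hp := (hg.deriv_normalCoord_pos hq).ne'
  have hsum : deriv (normalCoord g) q.1 * (q.2 * normalFriction g N o q) =
      ∑ k ∈ Finset.range (N + 1), o k q.1 * q.2 ^ (2 * k + 1) := by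
    simp only [normalFriction, Finset.mul_sum]
    refine Finset.sum_congr rfl fun k _ => ?_
    field_simp
    ring
  rw [mul_add, hg.deriv_normalCoord_mul hq, hsum, neg_add']
  rfl

lemma IsRestoringForce.radialWedge_eq (hg : IsRestoringForce a b g) (hq : q.1 ∈ Ioo a b) :
    radialWedge g N o q =
      q.2 ^ 2 + normalCoord g q.1 ^ 2 + normalCoord g q.1 * q.2 * normalFriction g N o q := by
  rw [radialWedge, hg.gOddVF_snd hq]
  linear_combination (normalCoord g q.1 + q.2 * normalFriction g N o q) *
    hg.radialCoeff_mul_deriv_normalCoord hq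

lemma sum_bracketCoeff_mul_pow (g : ℝ → ℝ) (N : ℕ) (o : ℕ → ℝ → ℝ) (q : ℝ × ℝ) :
    ∑ k ∈ Finset.range (N + 1), bracketCoeff g k (o k) q.1 * q.2 ^ (2 * k + 2) =
      radialCoeff g q.1 * ∑ k ∈ Finset.range (N + 1), deriv (o k) q.1 * q.2 ^ (2 * k + 2)
        - q.2 ^ 2 * gOddDiv N o q
        + (2 - deriv (radialCoeff g) q.1) * q.2 * (g q.1 + (gOddVF g N o q).2) := by
  simp only [gOddDiv, gOddVF, Finset.mul_sum, mul_neg, sub_eq_add_neg, add_neg_cancel_left,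
    neg_neg, ← Finset.sum_neg_distrib, ← Finset.sum_add_distrib]
  refine Finset.sum_congr rfl fun k _ => ?_
  rw [bracketCoeff]
  ring

lemma IsRestoringForce.bracketCoeff_mul_pow_nonneg (hg : IsRestoringForce a b g)
    (ho : ∀ k ∈ Finset.range (N + 1), SatisfiesHg a b g k (o k))
    (hq : q.1 ∈ Ioo a b) :
    ∀ k ∈ Finset.range (N + 1), 0 ≤ bracketCoeff g k (o k) q.1 * q.2 ^ (2 * k + 2) :=
  fun k hk => mul_nonneg ((ho k hk).bracketCoeff_nonneg hg hq)
    (Even.pow_nonneg (by simp [Nat.even_add]) _)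

section Rays

variable {x₁ x₂ r₁ r₂ c s : ℝ}

lemma IsRestoringForce.normalFriction_le_of_ray (hg : IsRestoringForce a b g)
    (ho : ∀ k ∈ Finset.range (N + 1), SatisfiesHg a b g k (o k))
    (hx₁ : x₁ ∈ Ioo a b) (hx₂ : x₂ ∈ Ioo a b) (hr₂ : 0 ≤ r₂) (hr : r₂ ≤ r₁)
    (h₁ : normalCoord g x₁ = r₁ * c) (h₂ : normalCoord g x₂ = r₂ * c) :
    normalFriction g N o (x₂, r₂ * s) ≤ normalFriction g N o (x₁, r₁ * s) :=
  Finset.sum_le_sum fun k hk => (ho k hk).friction_le_friction_of_ray hg hx₁ hx₂ hr₂ hr h₁ h₂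

lemma IsRestoringForce.bracketCoeff_eq_zero_of_normalFriction_eq (hg : IsRestoringForce a b g)
    (ho : ∀ k ∈ Finset.range (N + 1), SatisfiesHg a b g k (o k))
    (hx₁ : x₁ ∈ Ioo a b) (hx₂ : x₂ ∈ Ioo a b) (hr₂ : 0 ≤ r₂) (hr : r₂ < r₁)
    (hc : c ≠ 0) (hs : s ≠ 0) (h₁ : normalCoord g x₁ = r₁ * c) (h₂ : normalCoord g x₂ = r₂ * c)
    (heq : normalFriction g N o (x₂, r₂ * s) = normalFriction g N o (x₁, r₁ * s)) :
    ∀ k ∈ Finset.range (N + 1), bracketCoeff g k (o k) x₁ = 0 := fun k hk =>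
  (ho k hk).bracketCoeff_eq_zero_of_friction_eq hg hx₁ hx₂ hr₂ hr hc hs h₁ h₂
    ((Finset.sum_eq_sum_iff_of_le fun j hj =>
      (ho j hj).friction_le_friction_of_ray hg hx₁ hx₂ hr₂ hr.le h₁ h₂).1 heq k hk)

end Rays

end VectorField

section Trajectory

variable {a b : ℝ} {g : ℝ → ℝ} {N : ℕ} {o : ℕ → ℝ → ℝ} {γ : ℝ → ℝ × ℝ} {t : ℝ}

lemma hasDerivAt_fst_of_gOddVF (hγ : HasDerivAt γ (gOddVF g N o (γ t)) t) :
    HasDerivAt (fun t => (γ t).1) (γ t).2 t :=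
  (hasFDerivAt_fst (𝕜 := ℝ) (p := γ t)).comp_hasDerivAt t hγ

lemma hasDerivAt_snd_of_gOddVF (hγ : HasDerivAt γ (gOddVF g N o (γ t)) t) :
    HasDerivAt (fun t => (γ t).2) (gOddVF g N o (γ t)).2 t :=
  (hasFDerivAt_snd (𝕜 := ℝ) (p := γ t)).comp_hasDerivAt t hγ

lemma hasDerivAt_gOddVF_snd (hγ : HasDerivAt γ (gOddVF g N o (γ t)) t)
    (hg : DifferentiableAt ℝ g (γ t).1)
    (ho : ∀ k ∈ Finset.range (N + 1), DifferentiableAt ℝ (o k) (γ t).1) :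
    HasDerivAt (fun t => (gOddVF g N o (γ t)).2)
      (-(deriv g (γ t).1 * (γ t).2)
        - ∑ k ∈ Finset.range (N + 1), deriv (o k) (γ t).1 * (γ t).2 ^ (2 * k + 2)
        + gOddDiv N o (γ t) * (gOddVF g N o (γ t)).2) t := by
  have hx := hasDerivAt_fst_of_gOddVF hγ
  have hy := hasDerivAt_snd_of_gOddVF hγ
  refine ((hg.hasDerivAt.comp t hx).fun_neg.fun_sub (HasDerivAt.fun_sum fun k hk =>
    ((ho k hk).hasDerivAt.comp t hx).fun_mul (hy.fun_pow (2 * k + 1)))).congr_deriv ?_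
  rw [gOddDiv, neg_mul, Finset.sum_mul, ← sub_eq_add_neg, sub_sub, ← Finset.sum_add_distrib]
  congr 1
  refine Finset.sum_congr rfl fun k _ => ?_
  simp only [Function.comp_apply, add_tsub_cancel_right]
  push_cast
  ring

lemma IsRestoringForce.hasDerivAt_radialWedge (hg : IsRestoringForce a b g)
    (ho : ∀ k ∈ Finset.range (N + 1), DifferentiableAt ℝ (o k) (γ t).1)
    (hγ : HasDerivAt γ (gOddVF g N o (γ t)) t) (hx : (γ t).1 ∈ Ioo a b) :
    HasDerivAt (fun t => radialWedge g N o (γ t))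
      (gOddDiv N o (γ t) * radialWedge g N o (γ t) +
        ∑ k ∈ Finset.range (N + 1), bracketCoeff g k (o k) (γ t).1 * (γ t).2 ^ (2 * k + 2)) t := by
  refine (((hasDerivAt_snd_of_gOddVF hγ).fun_pow 2).fun_sub
    (((hg.hasDerivAt_radialCoeff hx).comp t (hasDerivAt_fst_of_gOddVF hγ)).fun_mul
      (hasDerivAt_gOddVF_snd hγ (hg.hasDerivAt hx).differentiableAt ho))).congr_deriv ?_
  rw [sum_bracketCoeff_mul_pow, radialWedge, Function.comp_apply]
  linear_combination (γ t).2 * hg.radialCoeff_mul_deriv hx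

end Trajectory

/-! ### The divergence along a cycle -/

/-- The wedge product of the vector field with the radial field along the curve `γ`, divided by the
expansion of area under the flow. Its growth is governed by the bracket of the two fields alone. -/
def normalizedWedge (g : ℝ → ℝ) (N : ℕ) (o : ℕ → ℝ → ℝ) (γ : ℝ → ℝ × ℝ) (t : ℝ) : ℝ :=
  radialWedge g N o (γ t) * Real.exp (-∫ s in (0 : ℝ)..t, gOddDiv N o (γ s))

namespace IsCycle

variable {a b T : ℝ} {g : ℝ → ℝ} {N : ℕ} {o : ℕ → ℝ → ℝ} {γ : ℝ → ℝ × ℝ}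

lemma continuous {F : ℝ × ℝ → ℝ × ℝ} (hγ : IsCycle F γ T) : Continuous γ :=
  continuous_iff_continuousAt.2 fun t => (hγ.1 t).continuousAt

lemma periodic {F : ℝ × ℝ → ℝ × ℝ} (hγ : IsCycle F γ T) : Function.Periodic γ T := hγ.2.2.1

lemma exists_fst_ne_zero (hγ : IsCycle (gOddVF g N o) γ T) : ∃ t, (γ t).1 ≠ 0 := by
  by_contra! hx
  obtain ⟨t₁, t₂, hne⟩ := hγ.2.2.2
  have hy : ∀ t, (γ t).2 = 0 := fun t =>
    (hasDerivAt_fst_of_gOddVF (hγ.1 t)).unique (by simpa only [hx] using hasDerivAt_const t 0)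
  exact hne (Prod.ext ((hx t₁).trans (hx t₂).symm) ((hy t₁).trans (hy t₂).symm))

lemma exists_snd_eq_zero (hγ : IsCycle (gOddVF g N o) γ T) : ∃ t, (γ t).1 ≠ 0 ∧ (γ t).2 = 0 := by
  have hcont : Continuous fun t => (γ t).1 ^ 2 := (continuous_fst.comp hγ.continuous).pow 2
  have hper : Function.Periodic (fun t => (γ t).1 ^ 2) T := hγ.periodic.comp fun q => q.1 ^ 2
  obtain ⟨_, ⟨t₀, rfl⟩, hmax⟩ := (hper.compact_of_continuous hγ.2.1.ne' hcont).exists_isGreatest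
    (range_nonempty _)
  replace hmax : ∀ t, (γ t).1 ^ 2 ≤ (γ t₀).1 ^ 2 := fun t => hmax (mem_range_self t)
  have hx : (γ t₀).1 ≠ 0 := by
    obtain ⟨t, ht⟩ := hγ.exists_fst_ne_zero
    exact pow_ne_zero_iff two_ne_zero |>.1 ((sq_pos_of_ne_zero ht).trans_le (hmax t)).ne'
  have hderiv := IsLocalMax.hasDerivAt_eq_zero (Eventually.of_forall hmax)
    ((hasDerivAt_fst_of_gOddVF (hγ.1 t₀)).fun_pow 2)
  exact ⟨t₀, hx, by simpa [hx] using hderiv⟩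

lemma exists_radialWedge_pos (hγ : IsCycle (gOddVF g N o) γ T) (hg : IsRestoringForce a b g)
    (hmem : ∀ t, (γ t).1 ∈ Ioo a b) : ∃ t, 0 < radialWedge g N o (γ t) := by
  obtain ⟨t, hx, hy⟩ := hγ.exists_snd_eq_zero
  refine ⟨t, ?_⟩
  rw [hg.radialWedge_eq (hmem t), hy]
  have := hg.normalCoord_ne_zero (hmem t) hx
  simp only [mul_zero, zero_mul, add_zero]
  positivity

lemma continuous_gOddDiv (hγ : IsCycle (gOddVF g N o) γ T)
    (ho : ∀ k ∈ Finset.range (N + 1), ContinuousOn (o k) (Ioo a b))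
    (hmem : ∀ t, (γ t).1 ∈ Ioo a b) : Continuous fun t => gOddDiv N o (γ t) := by
  have hx := continuous_fst.comp hγ.continuous
  have hy := continuous_snd.comp hγ.continuous
  refine (continuous_finsetSum _ fun k hk => (continuous_const.mul ?_).mul (hy.pow (2 * k))).neg
  exact (ho k hk).comp_continuous hx hmem

lemma normalizedWedge_add_period (hγ : IsCycle (gOddVF g N o) γ T)
    (ho : ∀ k ∈ Finset.range (N + 1), ContinuousOn (o k) (Ioo a b))
    (hmem : ∀ t, (γ t).1 ∈ Ioo a b) (t : ℝ) :
    normalizedWedge g N o γ (t + T) =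
      normalizedWedge g N o γ t * Real.exp (-∫ s in (0 : ℝ)..T, gOddDiv N o (γ s)) := by
  have hper : Function.Periodic (fun t => gOddDiv N o (γ t)) T := hγ.periodic.comp (gOddDiv N o)
  rw [normalizedWedge, normalizedWedge, hγ.periodic, hper.intervalIntegral_add_eq_add 0 t
      fun t₁ t₂ => (hγ.continuous_gOddDiv ho hmem).intervalIntegrable t₁ t₂, zero_add, neg_add,
    Real.exp_add, mul_assoc]

lemma hasDerivAt_normalizedWedge (hγ : IsCycle (gOddVF g N o) γ T) (hg : IsRestoringForce a b g)
    (ho : ∀ k ∈ Finset.range (N + 1), DifferentiableOn ℝ (o k) (Ioo a b))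
    (hmem : ∀ t, (γ t).1 ∈ Ioo a b) (t : ℝ) :
    HasDerivAt (normalizedWedge g N o γ)
      ((∑ k ∈ Finset.range (N + 1), bracketCoeff g k (o k) (γ t).1 * (γ t).2 ^ (2 * k + 2)) *
        Real.exp (-∫ s in (0 : ℝ)..t, gOddDiv N o (γ s))) t := by
  have hdiv := hγ.continuous_gOddDiv (fun k hk => (ho k hk).continuousOn) hmem
  refine ((hg.hasDerivAt_radialWedge
    (fun k hk => (ho k hk).differentiableAt (isOpen_Ioo.mem_nhds (hmem t))) (hγ.1 t)
    (hmem t)).fun_mul (hdiv.integral_hasStrictDerivAt 0 t).hasDerivAt.fun_neg.exp).congr_deriv ?_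
  ring

lemma monotone_normalizedWedge (hγ : IsCycle (gOddVF g N o) γ T) (hg : IsRestoringForce a b g)
    (ho : ∀ k ∈ Finset.range (N + 1), SatisfiesHg a b g k (o k))
    (hmem : ∀ t, (γ t).1 ∈ Ioo a b) : Monotone (normalizedWedge g N o γ) :=
  monotone_of_hasDerivAt_nonneg
    (hγ.hasDerivAt_normalizedWedge hg (fun k hk => (ho k hk).differentiableOn) hmem)
    fun t => mul_nonneg (Finset.sum_nonneg (hg.bracketCoeff_mul_pow_nonneg ho (hmem t)))
      (Real.exp_pos _).le

lemma radialWedge_pos (hγ : IsCycle (gOddVF g N o) γ T) (hg : IsRestoringForce a b g)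
    (ho : ∀ k ∈ Finset.range (N + 1), SatisfiesHg a b g k (o k))
    (hmem : ∀ t, (γ t).1 ∈ Ioo a b) (t : ℝ) : 0 < radialWedge g N o (γ t) := by
  obtain ⟨t₀, ht₀⟩ := hγ.exists_radialWedge_pos hg hmem
  obtain ⟨u, hu, hγu⟩ := hγ.periodic.exists_mem_Ico hγ.2.1 t t₀
  rw [hγu]
  exact pos_of_mul_pos_left ((mul_pos ht₀ (Real.exp_pos _)).trans_le
    (hγ.monotone_normalizedWedge hg ho hmem hu.1)) (Real.exp_pos _).le

lemma integral_gOddDiv_nonpos (hγ : IsCycle (gOddVF g N o) γ T) (hg : IsRestoringForce a b g)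
    (ho : ∀ k ∈ Finset.range (N + 1), SatisfiesHg a b g k (o k))
    (hmem : ∀ t, (γ t).1 ∈ Ioo a b) : ∫ t in (0 : ℝ)..T, gOddDiv N o (γ t) ≤ 0 := by
  have hpos : 0 < normalizedWedge g N o γ 0 :=
    mul_pos (hγ.radialWedge_pos hg ho hmem 0) (Real.exp_pos _)
  have hle := hγ.monotone_normalizedWedge hg ho hmem (le_add_of_nonneg_right (a := 0) hγ.2.1.le)
  rw [hγ.normalizedWedge_add_period (fun k hk => (ho k hk).differentiableOn.continuousOn) hmem,
    le_mul_iff_one_le_right hpos, Real.one_le_exp_iff] at hle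
  exact neg_nonneg.1 hle

lemma bracketCoeff_eq_zero_of_integral_gOddDiv_eq_zero (hγ : IsCycle (gOddVF g N o) γ T)
    (hg : IsRestoringForce a b g) (ho : ∀ k ∈ Finset.range (N + 1), SatisfiesHg a b g k (o k))
    (hmem : ∀ t, (γ t).1 ∈ Ioo a b) (hzero : ∫ t in (0 : ℝ)..T, gOddDiv N o (γ t) = 0) {t : ℝ}
    (hy : (γ t).2 ≠ 0) : ∀ k ∈ Finset.range (N + 1), bracketCoeff g k (o k) (γ t).1 = 0 := by
  have hdiff := fun k hk => (ho k hk).differentiableOn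
  have hper : Function.Periodic (normalizedWedge g N o γ) T := fun t => by
    rw [hγ.normalizedWedge_add_period (fun k hk => (hdiff k hk).continuousOn) hmem, hzero,
      neg_zero, Real.exp_zero, mul_one]
  have hderiv := deriv_eq_zero_of_monotone_of_periodic (hγ.monotone_normalizedWedge hg ho hmem)
    hper hγ.2.1.ne' (hγ.hasDerivAt_normalizedWedge hg hdiff hmem t)
  have hsum := (mul_eq_zero_iff_right (Real.exp_pos _).ne').1 hderiv
  intro k hk
  have hterm := (Finset.sum_eq_zero_iff_of_nonneg
    (hg.bracketCoeff_mul_pow_nonneg ho (hmem t))).1 hsum k hk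
  exact (mul_eq_zero_iff_right (pow_ne_zero _ hy)).1 hterm

end IsCycle

/-! ### Cycles in polar form -/

/-- The point `(u, y)`, `u = normalCoord g x`, of the complex plane. -/
def normalPoint (g : ℝ → ℝ) (q : ℝ × ℝ) : ℂ := ⟨normalCoord g q.1, q.2⟩

/-- The vector field of the system in the coordinates of `normalPoint`. -/
def normalVelocity (g : ℝ → ℝ) (N : ℕ) (o : ℕ → ℝ → ℝ) (q : ℝ × ℝ) : ℂ :=
  ⟨deriv (normalCoord g) q.1 * q.2, (gOddVF g N o q).2⟩

/-- The rate of change `dR/dθ` of the logarithmic radius along the solutions of `u' = y`,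
`y' = -u - y φ`, as a function of `φ`. -/
def radialSlope (θ φ : ℝ) : ℝ := sin θ ^ 2 * φ / (1 + sin θ * cos θ * φ)

lemma radialSlope_sub {θ φ₁ φ₂ : ℝ} (h₁ : 1 + sin θ * cos θ * φ₁ ≠ 0)
    (h₂ : 1 + sin θ * cos θ * φ₂ ≠ 0) :
    radialSlope θ φ₁ - radialSlope θ φ₂ =
      sin θ ^ 2 * (φ₁ - φ₂) / ((1 + sin θ * cos θ * φ₁) * (1 + sin θ * cos θ * φ₂)) := by
  rw [radialSlope, radialSlope, div_sub_div _ _ h₁ h₂]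
  ring

/-- `R` is the logarithmic radius and `τ` the time, as functions of the angle, of the curve `γ`
in the normal coordinates, and `γ` is an orbit of the system rotating clockwise. -/
structure IsPolarOrbit (g : ℝ → ℝ) (N : ℕ) (o : ℕ → ℝ → ℝ) (γ : ℝ → ℝ × ℝ) (R τ : ℝ → ℝ)
    (n : ℤ) : Prop where
  isPolarParam : IsPolarParam (fun t => normalPoint g (γ t)) R τ n
  one_add_pos : ∀ θ, 0 < 1 + sin θ * cos θ * normalFriction g N o (γ (τ θ))
  hasDerivAt : ∀ θ, HasDerivAt R (radialSlope θ (normalFriction g N o (γ (τ θ)))) θ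

section PolarOrbit

variable {a b T : ℝ} {g : ℝ → ℝ} {N : ℕ} {o : ℕ → ℝ → ℝ} {γ : ℝ → ℝ × ℝ} {R τ : ℝ → ℝ} {n : ℤ}

namespace IsPolarParam

lemma normalCoord_eq (hp : IsPolarParam (fun t => normalPoint g (γ t)) R τ n) (θ : ℝ) :
    normalCoord g (γ (τ θ)).1 = Real.exp (R θ) * cos θ := by
  simpa [normalPoint, Complex.exp_re] using congrArg Complex.re (hp.apply_eq θ)

lemma snd_eq (hp : IsPolarParam (fun t => normalPoint g (γ t)) R τ n) (θ : ℝ) :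
    (γ (τ θ)).2 = Real.exp (R θ) * sin θ := by
  simpa [normalPoint, Complex.exp_im] using congrArg Complex.im (hp.apply_eq θ)

end IsPolarParam

namespace IsRestoringForce

lemma hasDerivAt_normalPoint (hg : IsRestoringForce a b g) {t : ℝ}
    (hγ : HasDerivAt γ (gOddVF g N o (γ t)) t) (hx : (γ t).1 ∈ Ioo a b) :
    HasDerivAt (fun t => normalPoint g (γ t)) (normalVelocity g N o (γ t)) t := by
  simp only [normalPoint, normalVelocity, Complex.mk_eq_add_mul_I]
  exact ((hg.hasDerivAt_normalCoord hx).comp t (hasDerivAt_fst_of_gOddVF hγ)).ofReal_comp.fun_add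
    ((hasDerivAt_snd_of_gOddVF hγ).ofReal_comp.mul_const Complex.I)

variable {q : ℝ × ℝ}

lemma normalVelocity_div_normalPoint_re (hg : IsRestoringForce a b g) (hq : q.1 ∈ Ioo a b) :
    (normalVelocity g N o q / normalPoint g q).re = -(deriv (normalCoord g) q.1 *
      (q.2 ^ 2 * normalFriction g N o q) / Complex.normSq (normalPoint g q)) := by
  simp only [Complex.div_re, normalVelocity, normalPoint, hg.gOddVF_snd hq]
  ring

lemma normalVelocity_div_normalPoint_im (hg : IsRestoringForce a b g) (hq : q.1 ∈ Ioo a b) :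
    (normalVelocity g N o q / normalPoint g q).im = -(deriv (normalCoord g) q.1 *
      radialWedge g N o q / Complex.normSq (normalPoint g q)) := by
  simp only [Complex.div_im, normalVelocity, normalPoint, hg.gOddVF_snd hq, hg.radialWedge_eq hq]
  ring

lemma normalVelocity_div_normalPoint_re_div_im (hg : IsRestoringForce a b g) (hq : q.1 ∈ Ioo a b)
    (hq0 : normalPoint g q ≠ 0) :
    (normalVelocity g N o q / normalPoint g q).re / (normalVelocity g N o q / normalPoint g q).im =
      q.2 ^ 2 * normalFriction g N o q / radialWedge g N o q := by
  rw [hg.normalVelocity_div_normalPoint_re hq, hg.normalVelocity_div_normalPoint_im hq,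
    neg_div_neg_eq, div_div_div_cancel_right₀ (by simpa using hq0),
    mul_div_mul_left _ _ (hg.deriv_normalCoord_pos hq).ne']

lemma radialWedge_eq_mul_of_isPolarParam (hg : IsRestoringForce a b g)
    (hmem : ∀ t, (γ t).1 ∈ Ioo a b) (hp : IsPolarParam (fun t => normalPoint g (γ t)) R τ n)
    (θ : ℝ) : radialWedge g N o (γ (τ θ)) =
      Real.exp (R θ) ^ 2 * (1 + sin θ * cos θ * normalFriction g N o (γ (τ θ))) := by
  rw [hg.radialWedge_eq (hmem _), hp.normalCoord_eq, hp.snd_eq]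
  linear_combination Real.exp (R θ) ^ 2 * sin_sq_add_cos_sq θ

end IsRestoringForce

namespace IsCycle

lemma normalPoint_ne_zero (hγ : IsCycle (gOddVF g N o) γ T) (hg : IsRestoringForce a b g)
    (ho : ∀ k ∈ Finset.range (N + 1), SatisfiesHg a b g k (o k))
    (hmem : ∀ t, (γ t).1 ∈ Ioo a b) (t : ℝ) : normalPoint g (γ t) ≠ 0 := by
  intro h
  have hu : normalCoord g (γ t).1 = 0 := by simpa [normalPoint] using congrArg Complex.re h
  have hy : (γ t).2 = 0 := by simpa [normalPoint] using congrArg Complex.im h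
  have hpos := hγ.radialWedge_pos hg ho hmem t
  simp [hg.radialWedge_eq (hmem t), hu, hy] at hpos

lemma continuous_normalVelocity (hγ : IsCycle (gOddVF g N o) γ T) (hg : IsRestoringForce a b g)
    (ho : ∀ k ∈ Finset.range (N + 1), DifferentiableOn ℝ (o k) (Ioo a b))
    (hmem : ∀ t, (γ t).1 ∈ Ioo a b) : Continuous fun t => normalVelocity g N o (γ t) := by
  have hx := continuous_fst.comp hγ.continuous
  have hy := continuous_snd.comp hγ.continuous
  have hY : Continuous fun t => (gOddVF g N o (γ t)).2 :=
    continuous_iff_continuousAt.2 fun t => (hasDerivAt_gOddVF_snd (hγ.1 t)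
      (hg.hasDerivAt (hmem t)).differentiableAt
      fun k hk => (ho k hk).differentiableAt (isOpen_Ioo.mem_nhds (hmem t))).continuousAt
  simp only [normalVelocity, Complex.mk_eq_add_mul_I]
  exact (Complex.continuous_ofReal.comp
    ((hg.continuousOn_deriv_normalCoord.comp_continuous hx hmem).mul hy)).add
    ((Complex.continuous_ofReal.comp hY).mul continuous_const)

lemma exists_isPolarOrbit (hγ : IsCycle (gOddVF g N o) γ T) (hg : IsRestoringForce a b g)
    (ho : ∀ k ∈ Finset.range (N + 1), SatisfiesHg a b g k (o k))
    (hmem : ∀ t, (γ t).1 ∈ Ioo a b) : ∃ R τ n, IsPolarOrbit g N o γ R τ n := by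
  have hz0 := hγ.normalPoint_ne_zero hg ho hmem
  have hW := hγ.radialWedge_pos hg ho hmem
  have hrot : ∀ t, (normalVelocity g N o (γ t) / normalPoint g (γ t)).im < 0 := fun t => by
    rw [hg.normalVelocity_div_normalPoint_im (hmem t), neg_neg_iff_pos]
    exact div_pos (mul_pos (hg.deriv_normalCoord_pos (hmem t)) (hW t))
      (Complex.normSq_pos.2 (hz0 t))
  obtain ⟨R, τ, n, hp, hR⟩ := exists_isPolarParam
    (fun t => hg.hasDerivAt_normalPoint (hγ.1 t) (hmem t))
    (hγ.continuous_normalVelocity hg (fun k hk => (ho k hk).differentiableOn) hmem) hz0 hγ.2.1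
    (hγ.periodic.comp (normalPoint g)) hrot
  have hWeq := hg.radialWedge_eq_mul_of_isPolarParam (N := N) (o := o) hmem hp
  refine ⟨R, τ, n, hp, fun θ => ?_, fun θ => (hR θ).congr_deriv ?_⟩
  · exact pos_of_mul_pos_right (hWeq θ ▸ hW (τ θ)) (sq_nonneg _)
  · rw [hg.normalVelocity_div_normalPoint_re_div_im (hmem _) (hz0 _), hWeq, hp.snd_eq, mul_pow,
      mul_assoc, mul_div_mul_left _ _ (pow_ne_zero 2 (Real.exp_ne_zero _)), radialSlope]

end IsCycle

end PolarOrbit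

namespace IsPolarOrbit

variable {a b : ℝ} {g : ℝ → ℝ} {N : ℕ} {o : ℕ → ℝ → ℝ} {γ γ₁ γ₂ : ℝ → ℝ × ℝ}
  {R R₁ R₂ τ τ₁ τ₂ : ℝ → ℝ} {n n₁ n₂ : ℤ}

lemma continuous (hp : IsPolarOrbit g N o γ R τ n) : Continuous R :=
  continuous_iff_continuousAt.2 fun θ => (hp.hasDerivAt θ).continuousAt

lemma eq_mk (hp : IsPolarOrbit g N o γ R τ n) (θ : ℝ) :
    γ (τ θ) = ((γ (τ θ)).1, Real.exp (R θ) * sin θ) :=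
  Prod.ext rfl (hp.isPolarParam.snd_eq θ)

/-- The orbit crosses the `y`-axis near `θ = π / 2`, so it passes through every small `x`. -/
lemma exists_bracketCoeff_ne_zero (hp : IsPolarOrbit g N o γ R τ n) (hg : IsRestoringForce a b g)
    (hmem : ∀ t, (γ t).1 ∈ Ioo a b)
    (hstrict : ∃ᶠ x in 𝓝 0, ∃ k ∈ Finset.range (N + 1), HgLHS g k (o k) x ≠ 0) :
    ∃ θ, sin θ ≠ 0 ∧ cos θ ≠ 0 ∧
      ∃ k ∈ Finset.range (N + 1), bracketCoeff g k (o k) (γ (τ θ)).1 ≠ 0 := by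
  set u : ℝ → ℝ := fun θ => Real.exp (R θ) * cos θ
  have hu : Continuous u := (Real.continuous_exp.comp hp.continuous).mul continuous_cos
  have hright : 0 < u (π / 4) := mul_pos (Real.exp_pos _)
    (cos_pos_of_mem_Ioo ⟨by linarith [pi_pos], by linarith [pi_pos]⟩)
  have hleft : u (3 * π / 4) < 0 := mul_neg_of_pos_of_neg (Real.exp_pos _)
    (cos_neg_of_pi_div_two_lt_of_lt (by linarith [pi_pos]) (by linarith [pi_pos]))
  have hsmall : ∀ᶠ x in 𝓝 0, normalCoord g x ∈ Ioo (u (3 * π / 4)) (u (π / 4)) ∧ x ∈ Ioo a b :=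
    ((hg.hasDerivAt_normalCoord hg.zero_mem).continuousAt.eventually_mem
      (isOpen_Ioo.mem_nhds (by simpa using ⟨hleft, hright⟩))).and (isOpen_Ioo.mem_nhds hg.zero_mem)
  obtain ⟨x, ⟨k, hk, hkx⟩, hxu, hx⟩ := (hstrict.and_eventually hsmall).exists
  have hx0 : x ≠ 0 := by
    rintro rfl
    simp [HgLHS] at hkx
  obtain ⟨θ, hθ, hθx⟩ := intermediate_value_Icc' (by linarith [pi_pos]) hu.continuousOn
    (Ioo_subset_Icc_self hxu)
  have hγx : (γ (τ θ)).1 = x := hg.strictMonoOn_normalCoord.injOn (hmem _) hx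
    ((hp.isPolarParam.normalCoord_eq θ).trans hθx)
  refine ⟨θ, (sin_pos_of_pos_of_lt_pi ?_ ?_).ne', ?_, k, hk, ?_⟩
  · linarith [hθ.1, pi_pos]
  · linarith [hθ.2, pi_pos]
  · exact right_ne_zero_of_mul (hθx.trans_ne (hg.normalCoord_ne_zero hx hx0))
  · rw [hγx, hg.bracketCoeff_eq_div hx hx0]
    exact div_ne_zero hkx (hg.mul_pos x hx hx0).ne'

lemma mul_normalFriction_sub_nonneg (hp₁ : IsPolarOrbit g N o γ₁ R₁ τ₁ n₁)
    (hp₂ : IsPolarOrbit g N o γ₂ R₂ τ₂ n₂) (hg : IsRestoringForce a b g)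
    (ho : ∀ k ∈ Finset.range (N + 1), SatisfiesHg a b g k (o k))
    (hmem₁ : ∀ t, (γ₁ t).1 ∈ Ioo a b) (hmem₂ : ∀ t, (γ₂ t).1 ∈ Ioo a b) (θ : ℝ) :
    0 ≤ (R₁ θ - R₂ θ) *
      (normalFriction g N o (γ₁ (τ₁ θ)) - normalFriction g N o (γ₂ (τ₂ θ))) := by
  wlog hle : R₂ θ ≤ R₁ θ generalizing γ₁ γ₂ R₁ R₂ τ₁ τ₂ n₁ n₂
  · convert this hp₂ hp₁ hmem₂ hmem₁ (le_of_not_ge hle) using 1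
    ring
  rw [hp₁.eq_mk, hp₂.eq_mk]
  exact mul_nonneg (sub_nonneg.2 hle) (sub_nonneg.2 (hg.normalFriction_le_of_ray ho (hmem₁ _)
    (hmem₂ _) (Real.exp_pos _).le (Real.exp_le_exp.2 hle) (hp₁.isPolarParam.normalCoord_eq θ)
    (hp₂.isPolarParam.normalCoord_eq θ)))

lemma bracketCoeff_eq_zero_of_normalFriction_eq (hp₁ : IsPolarOrbit g N o γ₁ R₁ τ₁ n₁)
    (hp₂ : IsPolarOrbit g N o γ₂ R₂ τ₂ n₂) (hg : IsRestoringForce a b g)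
    (ho : ∀ k ∈ Finset.range (N + 1), SatisfiesHg a b g k (o k))
    (hmem₁ : ∀ t, (γ₁ t).1 ∈ Ioo a b) (hmem₂ : ∀ t, (γ₂ t).1 ∈ Ioo a b) {θ : ℝ}
    (hlt : R₂ θ < R₁ θ) (hsin : sin θ ≠ 0) (hcos : cos θ ≠ 0)
    (heq : normalFriction g N o (γ₁ (τ₁ θ)) = normalFriction g N o (γ₂ (τ₂ θ))) :
    ∀ k ∈ Finset.range (N + 1), bracketCoeff g k (o k) (γ₁ (τ₁ θ)).1 = 0 := by
  rw [hp₁.eq_mk, hp₂.eq_mk] at heq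
  exact hg.bracketCoeff_eq_zero_of_normalFriction_eq ho (hmem₁ _) (hmem₂ _) (Real.exp_pos _).le
    (Real.exp_lt_exp.2 hlt) hcos hsin (hp₁.isPolarParam.normalCoord_eq θ)
    (hp₂.isPolarParam.normalCoord_eq θ) heq.symm

lemma hasDerivAt_sq_sub (hp₁ : IsPolarOrbit g N o γ₁ R₁ τ₁ n₁)
    (hp₂ : IsPolarOrbit g N o γ₂ R₂ τ₂ n₂) (θ : ℝ) :
    HasDerivAt (fun θ => (R₁ θ - R₂ θ) ^ 2)
      (2 * sin θ ^ 2 * ((R₁ θ - R₂ θ) *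
        (normalFriction g N o (γ₁ (τ₁ θ)) - normalFriction g N o (γ₂ (τ₂ θ)))) /
        ((1 + sin θ * cos θ * normalFriction g N o (γ₁ (τ₁ θ))) *
          (1 + sin θ * cos θ * normalFriction g N o (γ₂ (τ₂ θ))))) θ := by
  refine (((hp₁.hasDerivAt θ).fun_sub (hp₂.hasDerivAt θ)).fun_pow 2).congr_deriv ?_
  rw [radialSlope_sub (hp₁.one_add_pos θ).ne' (hp₂.one_add_pos θ).ne']
  push_cast
  ring

lemma monotone_sq_sub (hp₁ : IsPolarOrbit g N o γ₁ R₁ τ₁ n₁)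
    (hp₂ : IsPolarOrbit g N o γ₂ R₂ τ₂ n₂) (hg : IsRestoringForce a b g)
    (ho : ∀ k ∈ Finset.range (N + 1), SatisfiesHg a b g k (o k))
    (hmem₁ : ∀ t, (γ₁ t).1 ∈ Ioo a b) (hmem₂ : ∀ t, (γ₂ t).1 ∈ Ioo a b) :
    Monotone fun θ => (R₁ θ - R₂ θ) ^ 2 :=
  monotone_of_hasDerivAt_nonneg (hp₁.hasDerivAt_sq_sub hp₂) fun θ => div_nonneg
    (mul_nonneg (by positivity) (hp₁.mul_normalFriction_sub_nonneg hp₂ hg ho hmem₁ hmem₂ θ))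
    (mul_nonneg (hp₁.one_add_pos θ).le (hp₂.one_add_pos θ).le)

lemma periodic_sq_sub (hp₁ : IsPolarOrbit g N o γ₁ R₁ τ₁ n₁)
    (hp₂ : IsPolarOrbit g N o γ₂ R₂ τ₂ n₂) :
    Function.Periodic (fun θ => (R₁ θ - R₂ θ) ^ 2) (2 * π * n₁ * n₂) := by
  have hperiod₁ : 2 * π * n₁ * n₂ = n₂ * (2 * π * n₁) := by ring
  have hperiod₂ : 2 * π * n₁ * n₂ = n₁ * (2 * π * n₂) := by ring
  have h₁ : Function.Periodic R₁ (2 * π * n₁ * n₂) :=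
    hperiod₁ ▸ hp₁.isPolarParam.periodic.int_mul n₂
  have h₂ : Function.Periodic R₂ (2 * π * n₁ * n₂) :=
    hperiod₂ ▸ hp₂.isPolarParam.periodic.int_mul n₁
  exact fun θ => by simp only [h₁ θ, h₂ θ]

lemma two_pi_mul_ne_zero (hp₁ : IsPolarOrbit g N o γ₁ R₁ τ₁ n₁)
    (hp₂ : IsPolarOrbit g N o γ₂ R₂ τ₂ n₂) : 2 * π * (n₁ : ℝ) * n₂ ≠ 0 := by
  simp [hp₁.isPolarParam.ne_zero, hp₂.isPolarParam.ne_zero]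

lemma not_forall_logRadius_lt (hp₁ : IsPolarOrbit g N o γ₁ R₁ τ₁ n₁)
    (hp₂ : IsPolarOrbit g N o γ₂ R₂ τ₂ n₂) (hg : IsRestoringForce a b g)
    (ho : ∀ k ∈ Finset.range (N + 1), SatisfiesHg a b g k (o k))
    (hstrict : ∃ᶠ x in 𝓝 0, ∃ k ∈ Finset.range (N + 1), HgLHS g k (o k) x ≠ 0)
    (hmem₁ : ∀ t, (γ₁ t).1 ∈ Ioo a b) (hmem₂ : ∀ t, (γ₂ t).1 ∈ Ioo a b) :
    ¬ ∀ θ, R₂ θ < R₁ θ := by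
  intro hlt
  obtain ⟨θ, hsin, hcos, k, hk, hne⟩ := hp₁.exists_bracketCoeff_ne_zero hg hmem₁ hstrict
  have hderiv := deriv_eq_zero_of_monotone_of_periodic
    (hp₁.monotone_sq_sub hp₂ hg ho hmem₁ hmem₂) (hp₁.periodic_sq_sub hp₂)
    (hp₁.two_pi_mul_ne_zero hp₂) (hp₁.hasDerivAt_sq_sub hp₂ θ)
  have hfriction : normalFriction g N o (γ₁ (τ₁ θ)) = normalFriction g N o (γ₂ (τ₂ θ)) := by
    simpa [hsin, sub_eq_zero, (hlt θ).ne', (hp₁.one_add_pos θ).ne', (hp₂.one_add_pos θ).ne']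
      using hderiv
  exact hne (hp₁.bracketCoeff_eq_zero_of_normalFriction_eq hp₂ hg ho hmem₁ hmem₂ (hlt θ) hsin hcos
    hfriction k hk)

lemma logRadius_eq (hp₁ : IsPolarOrbit g N o γ₁ R₁ τ₁ n₁)
    (hp₂ : IsPolarOrbit g N o γ₂ R₂ τ₂ n₂) (hg : IsRestoringForce a b g)
    (ho : ∀ k ∈ Finset.range (N + 1), SatisfiesHg a b g k (o k))
    (hstrict : ∃ᶠ x in 𝓝 0, ∃ k ∈ Finset.range (N + 1), HgLHS g k (o k) x ≠ 0)
    (hmem₁ : ∀ t, (γ₁ t).1 ∈ Ioo a b) (hmem₂ : ∀ t, (γ₂ t).1 ∈ Ioo a b) : R₁ = R₂ := by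
  obtain ⟨θ₁, hθ₁⟩ := not_forall.1
    (hp₁.not_forall_logRadius_lt hp₂ hg ho hstrict hmem₁ hmem₂)
  obtain ⟨θ₂, hθ₂⟩ := not_forall.1
    (hp₂.not_forall_logRadius_lt hp₁ hg ho hstrict hmem₂ hmem₁)
  obtain ⟨θ₀, hθ₀⟩ := intermediate_value_univ₂ hp₁.continuous hp₂.continuous
    (not_lt.1 hθ₁) (not_lt.1 hθ₂)
  funext θ
  have hconst := apply_eq_of_monotone_of_periodic
    (hp₁.monotone_sq_sub hp₂ hg ho hmem₁ hmem₂) (hp₁.periodic_sq_sub hp₂)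
    (hp₁.two_pi_mul_ne_zero hp₂) θ θ₀
  simpa [hθ₀, sub_eq_zero] using hconst

lemma range_eq (hp₁ : IsPolarOrbit g N o γ₁ R τ₁ n₁) (hp₂ : IsPolarOrbit g N o γ₂ R τ₂ n₂)
    (hg : IsRestoringForce a b g) (hmem₁ : ∀ t, (γ₁ t).1 ∈ Ioo a b)
    (hmem₂ : ∀ t, (γ₂ t).1 ∈ Ioo a b) : range γ₁ = range γ₂ := by
  have heq : ∀ θ, γ₁ (τ₁ θ) = γ₂ (τ₂ θ) := fun θ => Prod.ext
    (hg.strictMonoOn_normalCoord.injOn (hmem₁ _) (hmem₂ _)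
      (by rw [hp₁.isPolarParam.normalCoord_eq, hp₂.isPolarParam.normalCoord_eq]))
    (by rw [hp₁.isPolarParam.snd_eq, hp₂.isPolarParam.snd_eq])
  rw [← hp₁.isPolarParam.surjective.range_comp γ₁, ← hp₂.isPolarParam.surjective.range_comp γ₂]
  exact congrArg range (funext heq)

end IsPolarOrbit

section Cycles

variable {a b : ℝ} {g : ℝ → ℝ} {N : ℕ} {o : ℕ → ℝ → ℝ}

lemma IsCycle.range_eq {γ₁ γ₂ : ℝ → ℝ × ℝ} {T₁ T₂ : ℝ} (hγ₁ : IsCycle (gOddVF g N o) γ₁ T₁)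
    (hγ₂ : IsCycle (gOddVF g N o) γ₂ T₂) (hg : IsRestoringForce a b g)
    (ho : ∀ k ∈ Finset.range (N + 1), SatisfiesHg a b g k (o k))
    (hstrict : ∃ᶠ x in 𝓝 0, ∃ k ∈ Finset.range (N + 1), HgLHS g k (o k) x ≠ 0)
    (hmem₁ : ∀ t, (γ₁ t).1 ∈ Ioo a b) (hmem₂ : ∀ t, (γ₂ t).1 ∈ Ioo a b) :
    range γ₁ = range γ₂ := by
  obtain ⟨R₁, τ₁, n₁, hp₁⟩ := hγ₁.exists_isPolarOrbit hg ho hmem₁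
  obtain ⟨R₂, τ₂, n₂, hp₂⟩ := hγ₂.exists_isPolarOrbit hg ho hmem₂
  obtain rfl := hp₁.logRadius_eq hp₂ hg ho hstrict hmem₁ hmem₂
  exact hp₁.range_eq hp₂ hg hmem₁ hmem₂

lemma IsCycle.integral_gOddDiv_neg {γ : ℝ → ℝ × ℝ} {T : ℝ} (hγ : IsCycle (gOddVF g N o) γ T)
    (hg : IsRestoringForce a b g) (ho : ∀ k ∈ Finset.range (N + 1), SatisfiesHg a b g k (o k))
    (hstrict : ∃ᶠ x in 𝓝 0, ∃ k ∈ Finset.range (N + 1), HgLHS g k (o k) x ≠ 0)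
    (hmem : ∀ t, (γ t).1 ∈ Ioo a b) : ∫ t in (0 : ℝ)..T, gOddDiv N o (γ t) < 0 := by
  refine lt_of_le_of_ne (hγ.integral_gOddDiv_nonpos hg ho hmem) fun hzero => ?_
  obtain ⟨R, τ, n, hp⟩ := hγ.exists_isPolarOrbit hg ho hmem
  obtain ⟨θ, hsin, -, k, hk, hne⟩ := hp.exists_bracketCoeff_ne_zero hg hmem hstrict
  have hy : (γ (τ θ)).2 ≠ 0 := by
    rw [hp.isPolarParam.snd_eq]
    exact mul_ne_zero (Real.exp_ne_zero _) hsin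
  exact hne (hγ.bracketCoeff_eq_zero_of_integral_gOddDiv_eq_zero hg ho hmem hzero hy k hk)

end Cycles

lemma hasDerivAt_zero_of_sub_isLittleO {g : ℝ → ℝ}
    (hg : Asymptotics.IsLittleO (𝓝 0) (fun x => g x - x) (fun x : ℝ => x)) :
    HasDerivAt g 1 0 := by
  have hg0 : g 0 = 0 := by simpa using (hg.def one_pos).self_of_nhds
  rw [hasDerivAt_iff_isLittleO]
  simpa [hg0] using hg

theorem statement12_general {a b : ℝ} (ha : a < 0) (hb : 0 < b)
    {g : ℝ → ℝ} (hg : DifferentiableOn ℝ g (Ioo a b)) (hg0 : 0 < deriv g 0)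
    (hgsign : ∀ x ∈ Ioo a b, x ≠ 0 → 0 < x * g x) {N : ℕ} {o : ℕ → ℝ → ℝ}
    (ho : ∀ k ∈ Finset.range (N + 1), DifferentiableOn ℝ (o k) (Ioo a b))
    (hHg : ∀ k ∈ Finset.range (N + 1), ∀ x ∈ Ioo a b, x ≠ 0 → 0 ≤ HgLHS g k (o k) x)
    (hstrict : ∃ᶠ x in 𝓝 0, ∃ k ∈ Finset.range (N + 1), HgLHS g k (o k) x ≠ 0) :
    (∀ (γ₁ : ℝ → ℝ × ℝ) (T₁ : ℝ) (γ₂ : ℝ → ℝ × ℝ) (T₂ : ℝ),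
        IsCycle (gOddVF g N o) γ₁ T₁ → range γ₁ ⊆ Ioo a b ×ˢ (univ : Set ℝ) →
        IsCycle (gOddVF g N o) γ₂ T₂ → range γ₂ ⊆ Ioo a b ×ˢ (univ : Set ℝ) →
        range γ₁ = range γ₂) ∧
    (∀ (μ : ℝ → ℝ × ℝ) (T : ℝ),
        IsCycle (gOddVF g N o) μ T → range μ ⊆ Ioo a b ×ˢ (univ : Set ℝ) →
        ∫ t in (0 : ℝ)..T, gOddDiv N o (μ t) < 0) := by
  have hrest : IsRestoringForce a b g := ⟨ha, hb, hg, hg0, hgsign⟩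
  have hcoeff : ∀ k ∈ Finset.range (N + 1), SatisfiesHg a b g k (o k) := fun k hk =>
    ⟨ho k hk, hHg k hk⟩
  have hmem {γ : ℝ → ℝ × ℝ} (hγ : range γ ⊆ Ioo a b ×ˢ univ) (t : ℝ) : (γ t).1 ∈ Ioo a b :=
    (hγ (mem_range_self t)).1
  exact ⟨fun γ₁ T₁ γ₂ T₂ hγ₁ hsub₁ hγ₂ hsub₂ =>
      hγ₁.range_eq hγ₂ hrest hcoeff hstrict (hmem hsub₁) (hmem hsub₂),
    fun μ T hμ hsub => hμ.integral_gOddDiv_neg hrest hcoeff hstrict (hmem hsub)⟩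

/-- for `g(x) = x + o(x)` with `x g(x) > 0` for `x ≠ 0`, if every
odd coefficient satisfies condition (H_g^{2k+1}), and there is a sequence
`x_m → 0` along which some (H_g^{2k+1}) is strict, then the system
ẋ = y, ẏ = −g(x) − Σ_k f_{2k+1}(x) y^{2k+1} has at most one limit cycle in
`(a,b) × ℝ`, which is hyperbolic. -/
theorem statement12 (a b : ℝ) (ha : a < 0) (hb : 0 < b)
    (g : ℝ → ℝ) (hg : ContDiffOn ℝ 1 g (Ioo a b))
    (hglin : Asymptotics.IsLittleO (𝓝 (0:ℝ)) (fun x => g x - x) (fun x : ℝ => x))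
    (hgsign : ∀ x ∈ Ioo a b, x ≠ 0 → 0 < x * g x)
    (N : ℕ) (o : ℕ → ℝ → ℝ)
    (ho : ∀ k ∈ Finset.range (N + 1), ContDiffOn ℝ 1 (o k) (Ioo a b))
    (hHg : ∀ k ∈ Finset.range (N + 1), ∀ x ∈ Ioo a b, x ≠ 0 →
      0 ≤ HgLHS g k (o k) x)
    (hseq : ∃ xs : ℕ → ℝ, (∀ m, xs m ∈ Ioo a b) ∧ Tendsto xs atTop (𝓝 0) ∧
      ∀ m, ∃ k ∈ Finset.range (N + 1), HgLHS g k (o k) (xs m) ≠ 0) :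
    (∀ (γ₁ : ℝ → ℝ × ℝ) (T₁ : ℝ) (γ₂ : ℝ → ℝ × ℝ) (T₂ : ℝ),
        IsLimitCycle (gOddVF g N o) γ₁ T₁ →
        range γ₁ ⊆ Ioo a b ×ˢ (univ : Set ℝ) →
        IsLimitCycle (gOddVF g N o) γ₂ T₂ →
        range γ₂ ⊆ Ioo a b ×ˢ (univ : Set ℝ) →
        range γ₁ = range γ₂) ∧
    (∀ (μ : ℝ → ℝ × ℝ) (T : ℝ),
        IsLimitCycle (gOddVF g N o) μ T →
        range μ ⊆ Ioo a b ×ˢ (univ : Set ℝ) →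
        (∫ t in (0:ℝ)..T, gOddDiv N o (μ t)) ≠ 0) := by
  obtain ⟨xs, -, hxs, hne⟩ := hseq
  obtain ⟨huniq, hhyp⟩ := statement12_general ha hb (hg.differentiableOn one_ne_zero)
    ((hasDerivAt_zero_of_sub_isLittleO hglin).deriv ▸ one_pos) hgsign
    (fun k hk => (ho k hk).differentiableOn one_ne_zero) hHg
    (hxs.frequently (Frequently.of_forall hne))
  exact ⟨fun γ₁ T₁ γ₂ T₂ hγ₁ hsub₁ hγ₂ hsub₂ => huniq γ₁ T₁ γ₂ T₂ hγ₁.1 hsub₁ hγ₂.1 hsub₂,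
    fun μ T hμ hsub => (hhyp μ T hμ.1 hsub).ne⟩
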